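/- Let T > 0, let g satisfy (g1), be regularly oscillating at zero, and satisfy lim_{s→0⁺} g(s)/s = 0. Let a ∈ L¹([0,T]) satisfy (a1) and (a2), and set g_∞ := liminf_{s→+∞} g(s)/s. Assume that for each i = 1,…,m there exist λᵢ with 0 < λᵢ < g_∞ and a C¹ function φᵢ : Iᵢ → ℝ with absolutely continuous derivative, φᵢ > 0 on the interior of Iᵢ, φᵢ = 0 at both endpoints of Iᵢ, and φᵢ'' + λᵢ a(x) φᵢ = 0 a.e. on Iᵢ (i.e., g_∞ > max_i λ₁ⁱ, where λ₁ⁱ is the first eigenvalue of φ'' + λ a(x) φ = 0 with φ = 0 on ∂Iᵢ). Then the equation u'' + a(x) g(u) = 0 has at least one positive solution satisfying the Neumann boundary conditions and at least one positive solution satisfying the periodic boundary conditions. -/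

import Mathlib

open MeasureTheory Set Filter

/-- `u` (with derivative `u'`) is a C¹ solution of `u'' + f(x) = 0` on `[0,T]`:
`u'` is absolutely continuous and the equation holds a.e., expressed via the
integral equation `u'(x) = u'(0) − ∫₀ˣ f(t) dt`. -/
def IsSolOn (T : ℝ) (f : ℝ → ℝ) (u u' : ℝ → ℝ) : Prop :=
  (∀ x ∈ Icc (0:ℝ) T, HasDerivWithinAt u (u' x) (Icc (0:ℝ) T) x) ∧
  ContinuousOn u' (Icc (0:ℝ) T) ∧
  ∀ x ∈ Icc (0:ℝ) T, u' x = u' 0 - ∫ t in (0:ℝ)..x, f t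

/-- The equation `u'' + a(x) g(u) = 0` on `[0,T]` has a positive solution
satisfying the Neumann boundary conditions. -/
def PosSolNeumann (T : ℝ) (a g : ℝ → ℝ) : Prop :=
  ∃ u u' : ℝ → ℝ, IsSolOn T (fun t => a t * g (u t)) u u' ∧
    (∀ x ∈ Icc (0:ℝ) T, 0 < u x) ∧ u' 0 = 0 ∧ u' T = 0

/-- The equation `u'' + a(x) g(u) = 0` on `[0,T]` has a positive solution
satisfying the periodic boundary conditions. -/
def PosSolPeriodic (T : ℝ) (a g : ℝ → ℝ) : Prop :=
  ∃ u u' : ℝ → ℝ, IsSolOn T (fun t => a t * g (u t)) u u' ∧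
    (∀ x ∈ Icc (0:ℝ) T, 0 < u x) ∧ u 0 = u T ∧ u' 0 = u' T

/-- Condition (g1): `g : [0,∞) → [0,∞)` is continuous, `g 0 = 0`, `g > 0` on `(0,∞)`. -/
def CondG1 (g : ℝ → ℝ) : Prop :=
  ContinuousOn g (Ici (0:ℝ)) ∧ (∀ s : ℝ, 0 ≤ s → 0 ≤ g s) ∧ g 0 = 0 ∧
    ∀ s : ℝ, 0 < s → 0 < g s

/-- `g` is regularly oscillating at zero. -/
def RegOscAtZero (g : ℝ → ℝ) : Prop :=
  ∀ ε : ℝ, 0 < ε → ∃ δ > (0:ℝ), ∃ η > (0:ℝ), ∀ s ω : ℝ,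
    0 < s → s < δ → |ω - 1| < η → |g (ω * s) / g s - 1| < ε

/-- `liminf_{s → +∞} g(s)/s`, computed in `EReal`. -/
noncomputable def GrowthLiminf (g : ℝ → ℝ) : EReal :=
  liminf (fun s : ℝ => ((g s / s : ℝ) : EReal)) atTop

/-- `limsup_{s → +∞} g(s)/s`, computed in `EReal`. -/
noncomputable def GrowthLimsup (g : ℝ → ℝ) : EReal :=
  limsup (fun s : ℝ => ((g s / s : ℝ) : EReal)) atTop

/-- `(lam, φ)` is a Dirichlet eigenpair of `φ'' + λ a(x) φ = 0` on `[x₁,x₂]` with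
`φ > 0` in the interior (so `lam` is the first eigenvalue): `φ` is `C¹` with
absolutely continuous derivative, expressed via the integral equation. -/
def DirichletEigenpair (a : ℝ → ℝ) (x₁ x₂ lam : ℝ) : Prop :=
  ∃ φ φ' : ℝ → ℝ,
    (∀ x ∈ Icc x₁ x₂, HasDerivWithinAt φ (φ' x) (Icc x₁ x₂) x) ∧
    ContinuousOn φ' (Icc x₁ x₂) ∧
    (∀ x ∈ Ioo x₁ x₂, 0 < φ x) ∧ φ x₁ = 0 ∧ φ x₂ = 0 ∧
    ∀ x ∈ Icc x₁ x₂, φ' x = φ' x₁ - lam * ∫ t in x₁..x, a t * φ t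

/-!
Beyond a large threshold `R` the nonlinearity `g` may be replaced by a linear function: on each
interval `Iᵢ`, Sturm comparison with the Dirichlet eigenfunction `φᵢ`, combined with concavity,
bounds nonnegative solutions by `R`, and since `a ≤ 0` off the `Iᵢ`, a positive Neumann or periodic
solution takes its maximum on some `Iᵢ`.

Extend the modified `g` by zero to negative values and consider the displacement
`(u T - u 0, u' T - u' 0)` as a function of the initial data `(u 0, u' 0)`. Small nearly constant
solutions gain slope, since regular oscillation makes `∫ a(x) g(u)` comparable with
`g(u 0) ∫ a < 0`; solutions with large data cannot stay nonnegative on `Iᵢ` by the same comparison,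
and they leave zero with a constant negative slope. Hence shooting between small and large data with
`u' 0 = 0` gives the Neumann solution, and the nonzero winding number of the displacement around a
half-annulus between small and large data gives the periodic one. Solutions of the Cauchy problem
need not be unique, so the topological argument is applied to equations with a small delay, whose
solutions depend continuously on the initial data, and the delay is then sent to zero.
-/

/-! ### Integrals over subintervals -/

theorem intervalIntegrable_of_mem_Icc {f : ℝ → ℝ} {l r x y : ℝ}
    (h : IntervalIntegrable f volume l r) (hx : x ∈ Icc l r) (hy : y ∈ Icc l r) :
    IntervalIntegrable f volume x y :=
  h.mono_set ((uIcc_subset_Icc hx hy).trans Icc_subset_uIcc)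

theorem integral_eq_sub_of_hasDerivWithinAt_Icc {u u' : ℝ → ℝ} {l r x y : ℝ}
    (hu : ∀ t ∈ Icc l r, HasDerivWithinAt u (u' t) (Icc l r) t) (hu' : ContinuousOn u' (Icc l r))
    (hx : x ∈ Icc l r) (hy : y ∈ Icc l r) : ∫ t in x..y, u' t = u y - u x := by
  have hsub : uIcc x y ⊆ Icc l r := uIcc_subset_Icc hx hy
  refine intervalIntegral.integral_eq_sub_of_hasDeriv_right
    (fun t ht ↦ (hu t (hsub ht)).continuousWithinAt.mono hsub) (fun t ht ↦ ?_)
    (hu'.mono hsub).intervalIntegrable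
  have htlr : t ∈ Ioo l r := ⟨(le_min hx.1 hy.1).trans_lt ht.1, ht.2.trans_le (max_le hx.2 hy.2)⟩
  exact ((hu t (Ioo_subset_Icc_self htlr)).hasDerivAt (Icc_mem_nhds htlr.1 htlr.2)).hasDerivWithinAt

theorem integral_mul_add_mul_eq_sub_of_primitive {F f H h : ℝ → ℝ} {l r : ℝ} (hlr : l ≤ r)
    (hf : IntervalIntegrable f volume l r) (hh : IntervalIntegrable h volume l r)
    (hF : ∀ x ∈ Icc l r, F x = F l + ∫ t in l..x, f t)
    (hH : ∀ x ∈ Icc l r, H x = H l + ∫ t in l..x, h t) :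
    ∫ x in l..r, (f x * H x + F x * h x) = F r * H r - F l * H l := by
  have absCont {p : ℝ → ℝ} (hp : IntervalIntegrable p volume l r) (c : ℝ) :
      AbsolutelyContinuousOnInterval (fun x ↦ c + ∫ t in l..x, p t) l r :=
    ((LipschitzWith.const c).lipschitzOnWith).absolutelyContinuousOnInterval.add
      (hp.absolutelyContinuousOnInterval_intervalIntegral (c := l) left_mem_uIcc)
  have key := (absCont hf (F l)).integral_deriv_mul_eq_sub (absCont hh (H l))
  have hl : l ∈ Icc l r := left_mem_Icc.2 hlr
  have hr : r ∈ Icc l r := right_mem_Icc.2 hlr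
  rw [← hF r hr, ← hF l hl, ← hH r hr, ← hH l hl] at key
  rw [← key]
  apply intervalIntegral.integral_congr_ae
  filter_upwards [hf.ae_hasDerivAt_integral, hh.ae_hasDerivAt_integral] with x hfx hhx hx
  have hx' : x ∈ uIcc l r := uIoc_subset_uIcc hx
  rw [((hfx hx' l left_mem_uIcc).const_add _).deriv, ((hhx hx' l left_mem_uIcc).const_add _).deriv,
    hF x (uIcc_of_le hlr ▸ hx'), hH x (uIcc_of_le hlr ▸ hx')]

theorem integral_mul_exp_primitive_mem_uIcc {β : ℝ → ℝ} {x y c : ℝ}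
    (hβ : IntervalIntegrable β volume x y) (hβ0 : ∀ t, 0 ≤ β t) (hc : c ≠ 0) :
    ∫ t in x..y, β t * Real.exp (c * ∫ s in x..t, β s) ∈
      uIcc 0 ((Real.exp (c * ∫ s in x..y, β s) - 1) / c) := by
  set f : ℝ → ℝ := fun t ↦ Real.exp (c * ∫ s in x..t, β s) / c with hf
  have hmono : MonotoneOn f (uIcc x y) := by
    intro s hs t ht hst
    have hsub : (∫ τ in x..t, β τ) - ∫ τ in x..s, β τ = ∫ τ in s..t, β τ :=
      intervalIntegral.integral_interval_sub_left
        (hβ.mono_set (uIcc_subset_uIcc_left ht)) (hβ.mono_set (uIcc_subset_uIcc_left hs))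
    have hnonneg : 0 ≤ ∫ τ in s..t, β τ := intervalIntegral.integral_nonneg hst fun τ _ ↦ hβ0 τ
    rcases hc.lt_or_gt with hc | hc
    · refine div_le_div_of_nonpos_of_le hc.le (Real.exp_le_exp.2 ?_)
      exact mul_le_mul_of_nonpos_left (by linarith) hc.le
    · refine div_le_div_of_nonneg_right (Real.exp_le_exp.2 ?_) hc.le
      exact mul_le_mul_of_nonneg_left (by linarith) hc.le
  have hderiv : ∫ t in x..y, deriv f t = ∫ t in x..y, β t * Real.exp (c * ∫ s in x..t, β s) := by
    apply intervalIntegral.integral_congr_ae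
    filter_upwards [hβ.ae_hasDerivAt_integral] with t ht hmem
    rw [((((ht (uIoc_subset_uIcc hmem) x left_mem_uIcc).const_mul c).exp).div_const c).deriv]
    field_simp
  have hend : f y - f x = (Real.exp (c * ∫ s in x..y, β s) - 1) / c := by
    simp only [hf, intervalIntegral.integral_same, mul_zero, Real.exp_zero, sub_div]
  rw [← hderiv, ← hend]
  exact hmono.intervalIntegral_deriv_mem_uIcc

/-! ### Grönwall's inequality with an integrable kernel -/

theorem exists_abs_eq_two_mul_primitive_nonneg {β : ℝ → ℝ} (hβ0 : ∀ t, 0 ≤ β t) (x y : ℝ) :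
    ∃ c : ℝ, |c| = 2 ∧ ∀ z ∈ uIcc x y, 0 ≤ c * ∫ t in x..z, β t := by
  rcases le_total x y with hxy | hxy
  · refine ⟨2, by norm_num, fun z hz ↦ mul_nonneg zero_le_two ?_⟩
    exact intervalIntegral.integral_nonneg (uIcc_of_le hxy ▸ hz).1 fun t _ ↦ hβ0 t
  · refine ⟨-2, by norm_num, fun z hz ↦ mul_nonneg_of_nonpos_of_nonpos (by norm_num) ?_⟩
    rw [intervalIntegral.integral_symm, neg_nonpos]
    exact intervalIntegral.integral_nonneg (uIcc_of_ge hxy ▸ hz).2 fun t _ ↦ hβ0 t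

-- Maximising `N` against the weight `exp (-c ∫ β)` with `c = 2` (or `c = -2` backwards in time)
-- absorbs half of the maximum, so one never needs the exponential of a primitive to be
-- absolutely continuous.
theorem le_two_mul_exp_mul_of_le_add_abs_integral {β N : ℝ → ℝ} {x y : ℝ}
    (hβ : IntervalIntegrable β volume x y) (hβ0 : ∀ t, 0 ≤ β t) (hN : ContinuousOn N (uIcc x y))
    (hN0 : ∀ t ∈ uIcc x y, 0 ≤ N t)
    (h : ∀ z ∈ uIcc x y, N z ≤ N x + |∫ t in x..z, β t * N t|) :
    N y ≤ 2 * Real.exp (2 * |∫ t in x..y, β t|) * N x := by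
  obtain ⟨c, hc, hcB⟩ := exists_abs_eq_two_mul_primitive_nonneg hβ0 x y
  set w : ℝ → ℝ := fun z ↦ Real.exp (c * ∫ t in x..z, β t) with hw
  have hw0 (z : ℝ) : 0 < w z := Real.exp_pos _
  have hwc : ContinuousOn w (uIcc x y) :=
    ((intervalIntegral.continuousOn_primitive_interval' hβ left_mem_uIcc).const_mul c).rexp
  obtain ⟨z, hz, hmax⟩ := isCompact_uIcc.exists_isMaxOn nonempty_uIcc
    (hN.div hwc fun z _ ↦ (hw0 z).ne')
  set M : ℝ := N z / w z
  have hM0 : 0 ≤ M := div_nonneg (hN0 z hz) (hw0 z).le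
  have hNM : ∀ t ∈ uIcc x y, N t ≤ M * w t := fun t ht ↦ (div_le_iff₀ (hw0 t)).1 (hmax ht)
  have hβz : IntervalIntegrable β volume x z := hβ.mono_set (uIcc_subset_uIcc_left hz)
  have hwint : |∫ t in x..z, β t * w t| ≤ (w z - 1) / 2 := by
    have := abs_sub_left_of_mem_uIcc
      (integral_mul_exp_primitive_mem_uIcc hβz hβ0 (abs_pos.1 (hc ▸ zero_lt_two)))
    rwa [sub_zero, sub_zero, abs_div, hc, abs_of_nonneg
      (sub_nonneg.2 (Real.one_le_exp (hcB z hz)))] at this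
  have hNint : |∫ t in x..z, β t * N t| ≤ M * ((w z - 1) / 2) := by
    refine (intervalIntegral.norm_integral_le_abs_of_norm_le (μ := volume)
      (f := fun t ↦ β t * N t) (g := fun t ↦ M * (β t * w t))
      ((ae_restrict_iff' measurableSet_uIoc).2 (ae_of_all _ fun t ht ↦ ?_))
      ((hβz.mul_continuousOn (hwc.mono (uIcc_subset_uIcc_left hz))).const_mul M)).trans ?_
    · have ht : t ∈ uIcc x y := uIcc_subset_uIcc_left hz (uIoc_subset_uIcc ht)
      rw [Real.norm_of_nonneg (mul_nonneg (hβ0 t) (hN0 t ht)), mul_left_comm]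
      exact mul_le_mul_of_nonneg_left (hNM t ht) (hβ0 t)
    · rw [intervalIntegral.integral_const_mul, abs_mul, abs_of_nonneg hM0]
      exact mul_le_mul_of_nonneg_left hwint hM0
  have hMx : M ≤ 2 * N x := by
    have hNz : M * w z = N z := div_mul_cancel₀ _ (hw0 z).ne'
    have hwz : 1 ≤ w z := Real.one_le_exp (hcB z hz)
    have := h z hz
    nlinarith
  have hwy : w y = Real.exp (2 * |∫ t in x..y, β t|) := by
    rw [hw, ← hc, ← abs_mul, abs_of_nonneg (hcB y right_mem_uIcc)]
  calc N y ≤ M * w y := hNM y right_mem_uIcc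
    _ ≤ 2 * N x * w y := mul_le_mul_of_nonneg_right hMx (hw0 y).le
    _ = 2 * Real.exp (2 * |∫ t in x..y, β t|) * N x := by rw [hwy]; ring

/-! ### Solutions of `u'' + f = 0` -/

/-- `u` is a `C¹` solution of `u'' + f = 0` on `[l, r]` with derivative `u'`. The equation is
integrated between two arbitrary points of `[l, r]`, so that it restricts to subintervals. -/
structure IsSolIcc (f : ℝ → ℝ) (l r : ℝ) (u u' : ℝ → ℝ) : Prop where
  hasDerivWithinAt : ∀ x ∈ Icc l r, HasDerivWithinAt u (u' x) (Icc l r) x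
  continuousOn_deriv : ContinuousOn u' (Icc l r)
  deriv_eq : ∀ x ∈ Icc l r, ∀ y ∈ Icc l r, u' y = u' x - ∫ t in x..y, f t

namespace IsSolIcc

variable {f h u u' v v' : ℝ → ℝ} {l r : ℝ}

theorem of_deriv_eq_left (hf : IntervalIntegrable f volume l r)
    (hu : ∀ x ∈ Icc l r, HasDerivWithinAt u (u' x) (Icc l r) x) (hu' : ContinuousOn u' (Icc l r))
    (heq : ∀ x ∈ Icc l r, u' x = u' l - ∫ t in l..x, f t) : IsSolIcc f l r u u' := by
  refine ⟨hu, hu', fun x hx y hy ↦ ?_⟩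
  have hl : l ∈ Icc l r := left_mem_Icc.2 (hx.1.trans hx.2)
  rw [heq x hx, heq y hy, ← intervalIntegral.integral_add_adjacent_intervals
    (intervalIntegrable_of_mem_Icc hf hl hx) (intervalIntegrable_of_mem_Icc hf hx hy)]
  ring

theorem isSolOn {T : ℝ} (hs : IsSolIcc f 0 T u u') : IsSolOn T f u u' :=
  ⟨hs.hasDerivWithinAt, hs.continuousOn_deriv, fun x hx ↦
    hs.deriv_eq 0 (left_mem_Icc.2 (hx.1.trans hx.2)) x hx⟩

theorem continuousOn (hs : IsSolIcc f l r u u') : ContinuousOn u (Icc l r) :=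
  fun x hx ↦ (hs.hasDerivWithinAt x hx).continuousWithinAt

theorem mono {l₁ r₁ : ℝ} (hs : IsSolIcc f l r u u') (hl : l ≤ l₁) (hr : r₁ ≤ r) :
    IsSolIcc f l₁ r₁ u u' :=
  have hsub : Icc l₁ r₁ ⊆ Icc l r := Icc_subset_Icc hl hr
  ⟨fun x hx ↦ (hs.hasDerivWithinAt x (hsub hx)).mono hsub, hs.continuousOn_deriv.mono hsub,
    fun x hx y hy ↦ hs.deriv_eq x (hsub hx) y (hsub hy)⟩

theorem congr (hs : IsSolIcc f l r u u') (hfh : EqOn f h (Icc l r)) : IsSolIcc h l r u u' :=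
  ⟨hs.hasDerivWithinAt, hs.continuousOn_deriv, fun x hx y hy ↦ by
    rw [hs.deriv_eq x hx y hy, intervalIntegral.integral_congr
      (hfh.mono (uIcc_subset_Icc hx hy))]⟩

theorem integral_deriv (hs : IsSolIcc f l r u u') {x y : ℝ} (hx : x ∈ Icc l r)
    (hy : y ∈ Icc l r) : ∫ t in x..y, u' t = u y - u x :=
  integral_eq_sub_of_hasDerivWithinAt_Icc hs.hasDerivWithinAt hs.continuousOn_deriv hx hy

theorem intervalIntegrable_deriv (hs : IsSolIcc f l r u u') {x y : ℝ} (hx : x ∈ Icc l r)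
    (hy : y ∈ Icc l r) : IntervalIntegrable u' volume x y :=
  (hs.continuousOn_deriv.mono (uIcc_subset_Icc hx hy)).intervalIntegrable

theorem antitoneOn_deriv (hs : IsSolIcc f l r u u')
    (hf : ∀ᵐ x ∂volume.restrict (Icc l r), 0 ≤ f x) : AntitoneOn u' (Icc l r) := by
  intro x hx y hy hxy
  rw [hs.deriv_eq x hx y hy]
  exact sub_le_self _ (intervalIntegral.integral_nonneg_of_ae_restrict hxy
    (ae_restrict_of_ae_restrict_of_subset (Icc_subset_Icc hx.1 hy.2) hf))

theorem concaveOn (hs : IsSolIcc f l r u u')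
    (hf : ∀ᵐ x ∂volume.restrict (Icc l r), 0 ≤ f x) : ConcaveOn ℝ (Icc l r) u := by
  have hderiv : ∀ x ∈ Ioo l r, HasDerivAt u (u' x) x := fun x hx ↦
    (hs.hasDerivWithinAt x (Ioo_subset_Icc_self hx)).hasDerivAt (Icc_mem_nhds hx.1 hx.2)
  refine AntitoneOn.concaveOn_of_deriv (convex_Icc l r) hs.continuousOn ?_ ?_ <;>
    rw [interior_Icc]
  · exact fun x hx ↦ (hderiv x hx).differentiableAt.differentiableWithinAt
  · intro x hx y hy hxy
    rw [(hderiv x hx).deriv, (hderiv y hy).deriv]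
    exact hs.antitoneOn_deriv hf (Ioo_subset_Icc_self hx) (Ioo_subset_Icc_self hy) hxy

theorem abs_sub_sub_mul_le (hs : IsSolIcc f l r u u') {D : ℝ}
    (hD : ∀ x ∈ Icc l r, |u' x - u' l| ≤ D) {x : ℝ} (hx : x ∈ Icc l r) :
    |u x - u l - u' l * (x - l)| ≤ D * (x - l) := by
  have hl : l ∈ Icc l r := left_mem_Icc.2 (hx.1.trans hx.2)
  have hint : u x - u l - u' l * (x - l) = ∫ t in l..x, (u' t - u' l) := by
    rw [intervalIntegral.integral_sub (hs.intervalIntegrable_deriv hl hx) intervalIntegrable_const,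
      hs.integral_deriv hl hx, intervalIntegral.integral_const, smul_eq_mul, mul_comm]
  rw [hint, ← abs_of_nonneg (sub_nonneg.2 hx.1)]
  exact intervalIntegral.norm_integral_le_of_norm_le_const (f := fun t ↦ u' t - u' l)
    fun t ht ↦ hD t (uIcc_subset_Icc hl hx (uIoc_subset_uIcc ht))

theorem green (hs : IsSolIcc f l r u u') (ht : IsSolIcc h l r v v') (hlr : l ≤ r)
    (hf : IntervalIntegrable f volume l r) (hh : IntervalIntegrable h volume l r) :
    ∫ x in l..r, (f x * v x - h x * u x) =
      (v' r * u r - u' r * v r) - (v' l * u l - u' l * v l) := by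
  have hl : l ∈ Icc l r := left_mem_Icc.2 hlr
  have hr : r ∈ Icc l r := right_mem_Icc.2 hlr
  have parts {p q w w' z z' : ℝ → ℝ} (hw : IsSolIcc p l r w w') (hz : IsSolIcc q l r z z')
      (hp : IntervalIntegrable p volume l r) :
      ∫ x in l..r, (-p x * z x + w' x * z' x) = w' r * z r - w' l * z l :=
    integral_mul_add_mul_eq_sub_of_primitive hlr hp.neg (hz.intervalIntegrable_deriv hl hr)
      (fun x hx ↦ by rw [hw.deriv_eq l hl x hx, intervalIntegral.integral_neg, sub_eq_add_neg])
      (fun x hx ↦ by rw [hz.integral_deriv hl hx]; ring)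
  have integrable {p q w w' z z' : ℝ → ℝ} (hw : IsSolIcc p l r w w') (hz : IsSolIcc q l r z z')
      (hp : IntervalIntegrable p volume l r) :
      IntervalIntegrable (fun x ↦ -p x * z x + w' x * z' x) volume l r :=
    (hp.neg.mul_continuousOn (uIcc_of_le hlr ▸ hz.continuousOn)).add
      ((hw.intervalIntegrable_deriv hl hr).mul_continuousOn
        (uIcc_of_le hlr ▸ hz.continuousOn_deriv))
  rw [sub_sub_sub_comm, ← parts ht hs hh, ← parts hs ht hf,
    ← intervalIntegral.integral_sub (integrable ht hs hh) (integrable hs ht hf)]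
  congr 1 with x
  ring

theorem abs_add_abs_deriv_le {a : ℝ → ℝ} {K : ℝ} (hK : 0 ≤ K)
    (ha : IntervalIntegrable a volume l r) (hs : IsSolIcc (fun t ↦ a t * h t) l r u u')
    (hh : ∀ t ∈ Icc l r, |h t| ≤ K * |u t|) {x y : ℝ} (hx : x ∈ Icc l r) (hy : y ∈ Icc l r) :
    |u y| + |u' y| ≤ |u x| + |u' x| + |∫ t in x..y, (1 + K * |a t|) * (|u t| + |u' t|)| := by
  have hsub : uIcc x y ⊆ Icc l r := uIcc_subset_Icc hx hy
  set N : ℝ → ℝ := fun t ↦ |u t| + |u' t| with hN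
  have hNc : ContinuousOn N (uIcc x y) :=
    (hs.continuousOn.abs.add hs.continuousOn_deriv.abs).mono hsub
  have hu : IntegrableOn N (uIoc x y) := intervalIntegrable_iff.1 hNc.intervalIntegrable
  have hau : IntegrableOn (fun t ↦ K * |a t| * N t) (uIoc x y) := intervalIntegrable_iff.1
    (((intervalIntegrable_of_mem_Icc ha hx hy).abs.const_mul K).mul_continuousOn hNc)
  have hpos : |u y| ≤ |u x| + ∫ t in uIoc x y, N t := by
    rw [← sub_add_cancel (u y) (u x), ← hs.integral_deriv hx hy, add_comm]
    refine (abs_add_le _ _).trans (add_le_add_right ?_ _)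
    exact intervalIntegral.norm_integral_le_integral_norm_uIoc.trans
      (integral_mono_of_nonneg (ae_of_all _ fun t ↦ norm_nonneg (u' t)) hu
        (ae_of_all _ fun t ↦ le_add_of_nonneg_left (abs_nonneg (u t))))
  have hvel : |u' y| ≤ |u' x| + ∫ t in uIoc x y, K * |a t| * N t := by
    rw [hs.deriv_eq x hx y hy]
    refine (abs_sub _ _).trans (add_le_add_right ?_ _)
    refine intervalIntegral.norm_integral_le_integral_norm_uIoc.trans
      (integral_mono_of_nonneg (ae_of_all _ fun t ↦ norm_nonneg (a t * h t)) hau ?_)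
    filter_upwards [ae_restrict_mem measurableSet_uIoc] with t ht
    have : |h t| ≤ K * N t := (hh t (hsub (uIoc_subset_uIcc ht))).trans (by gcongr; simp [hN])
    calc |a t * h t| = |a t| * |h t| := abs_mul _ _
      _ ≤ |a t| * (K * N t) := by gcongr
      _ = K * |a t| * N t := by ring
  have hsum : |∫ t in x..y, (1 + K * |a t|) * N t| =
      (∫ t in uIoc x y, N t) + ∫ t in uIoc x y, K * |a t| * N t := by
    rw [intervalIntegral.abs_integral_eq_abs_integral_uIoc, ← integral_add hu hau,
      abs_of_nonneg (integral_nonneg fun t ↦ by positivity)]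
    congr 1 with t
    ring
  rw [hsum]
  linarith

end IsSolIcc

theorem exists_forall_abs_add_abs_deriv_le {a : ℝ → ℝ} {l r K : ℝ} (hK : 0 ≤ K)
    (ha : IntervalIntegrable a volume l r) :
    ∃ E : ℝ, 1 ≤ E ∧ ∀ u u' h : ℝ → ℝ, IsSolIcc (fun t ↦ a t * h t) l r u u' →
      (∀ x ∈ Icc l r, |h x| ≤ K * |u x|) →
      ∀ x ∈ Icc l r, ∀ y ∈ Icc l r, |u y| + |u' y| ≤ E * (|u x| + |u' x|) := by
  set β : ℝ → ℝ := fun t ↦ 1 + K * |a t|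
  have hβ : IntervalIntegrable β volume l r :=
    intervalIntegrable_const.add (ha.abs.const_mul K)
  have hβ0 (t : ℝ) : 0 ≤ β t := by positivity
  refine ⟨2 * Real.exp (2 * |∫ t in l..r, β t|), ?_, fun u u' h hs hh x hx y hy ↦ ?_⟩
  · linarith [Real.one_le_exp (x := 2 * |∫ t in l..r, β t|) (by positivity)]
  have hsub : uIcc x y ⊆ Icc l r := uIcc_subset_Icc hx hy
  refine (le_two_mul_exp_mul_of_le_add_abs_integral (N := fun t ↦ |u t| + |u' t|)
    (intervalIntegrable_of_mem_Icc hβ hx hy) hβ0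
    ((hs.continuousOn.abs.add hs.continuousOn_deriv.abs).mono hsub) (fun t _ ↦ by positivity)
    fun z hz ↦ hs.abs_add_abs_deriv_le hK ha hh hx (hsub hz)).trans ?_
  gcongr 2 * Real.exp (2 * ?_) * _
  exact intervalIntegral.abs_integral_mono_interval (uIoc_subset_uIoc_of_uIcc_subset_uIcc
    (hsub.trans Icc_subset_uIcc)) (ae_of_all _ hβ0) hβ

/-! ### Sturm comparison with a positive Dirichlet eigenfunction -/

theorem mul_sub_nonpos_of_isMaxOn_Icc {u : ℝ → ℝ} {l r x₀ d : ℝ}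
    (hu : HasDerivWithinAt u d (Icc l r) x₀) (hmax : IsMaxOn u (Icc l r) x₀)
    (hx₀ : x₀ ∈ Icc l r) {y : ℝ} (hy : y ∈ Icc l r) : d * (y - x₀) ≤ 0 := by
  have hcone : y - x₀ ∈ posTangentConeAt (Icc l r) x₀ :=
    sub_mem_posTangentConeAt_of_segment_subset ((convex_Icc l r).segment_subset hx₀ hy)
  simpa [mul_comm] using hmax.localize.hasFDerivWithinAt_nonpos hu.hasFDerivWithinAt hcone

theorem mul_le_of_concaveOn_of_nonneg {s : Set ℝ} {u : ℝ → ℝ} (hu : ConcaveOn ℝ s u)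
    {e z θ : ℝ} (he : e ∈ s) (hz : z ∈ s) (hue : 0 ≤ u e) (hθ0 : 0 ≤ θ) (hθ1 : θ ≤ 1) :
    θ * u z ≤ u (e + θ * (z - e)) := by
  have h := hu.2 he hz (sub_nonneg.2 hθ1) hθ0 (sub_add_cancel 1 θ)
  simp only [smul_eq_mul] at h
  rw [show (1 - θ) * e + θ * z = e + θ * (z - e) by ring] at h
  exact (le_add_of_nonneg_left (mul_nonneg (sub_nonneg.2 hθ1) hue)).trans h

theorem mul_sub_mul_sub_div_sq_le_of_concaveOn {l r : ℝ} (hlr : l < r) {u : ℝ → ℝ}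
    (hu : ConcaveOn ℝ (Icc l r) u) (hu0 : ∀ x ∈ Icc l r, 0 ≤ u x) {x z : ℝ} (hx : x ∈ Icc l r)
    (hz : z ∈ Icc l r) : u z * ((x - l) * (r - x) / (r - l) ^ 2) ≤ u x := by
  have hL : 0 < r - l := sub_pos.2 hlr
  have hl : 0 ≤ x - l := sub_nonneg.2 hx.1
  have hr : 0 ≤ r - x := sub_nonneg.2 hx.2
  have hsplit : (x - l) * (r - x) / (r - l) ^ 2 = (x - l) / (r - l) * ((r - x) / (r - l)) := by
    rw [div_mul_div_comm, sq]
  have hl1 : (x - l) / (r - l) ≤ 1 := (div_le_one hL).2 (by linarith [hx.2])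
  have hr1 : (r - x) / (r - l) ≤ 1 := (div_le_one hL).2 (by linarith [hx.1])
  rw [hsplit, mul_comm]
  rcases le_total x z with hxz | hxz
  · rcases hl.eq_or_lt with hxl | hxl
    · simpa [← hxl] using hu0 x hx
    have hzl : 0 < z - l := by linarith
    have h := mul_le_of_concaveOn_of_nonneg hu (left_mem_Icc.2 hlr.le) hz
      (hu0 l (left_mem_Icc.2 hlr.le)) (div_nonneg hl hzl.le) ((div_le_one hzl).2 (by linarith))
    rw [div_mul_cancel₀ _ hzl.ne', add_sub_cancel] at h
    refine (mul_le_mul_of_nonneg_right ?_ (hu0 z hz)).trans h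
    calc _ ≤ (x - l) / (r - l) := mul_le_of_le_one_right (div_nonneg hl hL.le) hr1
      _ ≤ (x - l) / (z - l) := div_le_div_of_nonneg_left hl hzl (by linarith [hz.2])
  · rcases hr.eq_or_lt with hxr | hxr
    · simpa [← hxr] using hu0 x hx
    have hzr : 0 < r - z := by linarith
    have h := mul_le_of_concaveOn_of_nonneg hu (right_mem_Icc.2 hlr.le) hz
      (hu0 r (right_mem_Icc.2 hlr.le)) (div_nonneg hr hzr.le) ((div_le_one hzr).2 (by linarith))
    rw [show r + (r - x) / (r - z) * (z - r) = x by field_simp; ring] at h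
    refine (mul_le_mul_of_nonneg_right ?_ (hu0 z hz)).trans h
    calc _ ≤ (r - x) / (r - l) := mul_le_of_le_one_left (div_nonneg hr hL.le) hl1
      _ ≤ (r - x) / (r - z) := div_le_div_of_nonneg_left hr hzr (by linarith [hz.1])

theorem integral_mul_pos_of_not_ae_eq_zero {a w : ℝ → ℝ} {l r : ℝ} (hlr : l ≤ r)
    (ha : IntervalIntegrable a volume l r) (ha0 : ∀ᵐ x ∂volume.restrict (Icc l r), 0 ≤ a x)
    (hane : ¬ ∀ᵐ x ∂volume.restrict (Icc l r), a x = 0) (hw : ContinuousOn w (Icc l r))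
    (hw0 : ∀ x ∈ Ioo l r, 0 < w x) : 0 < ∫ x in l..r, a x * w x := by
  rw [← restrict_Ioo_eq_restrict_Icc] at ha0 hane
  have haw0 : ∀ᵐ x ∂volume.restrict (Ioc l r), 0 ≤ a x * w x := by
    rw [← restrict_Ioo_eq_restrict_Ioc]
    filter_upwards [ha0, ae_restrict_mem measurableSet_Ioo] with x hax hx
    exact mul_nonneg hax (hw0 x hx).le
  have hint : IntervalIntegrable (fun x ↦ a x * w x) volume l r :=
    ha.mul_continuousOn (uIcc_of_le hlr ▸ hw)
  have hnonneg : 0 ≤ ∫ x in l..r, a x * w x := by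
    rw [intervalIntegral.integral_of_le hlr]
    exact integral_nonneg_of_ae haw0
  refine hnonneg.lt_of_ne fun h ↦ hane ?_
  have hzero := (intervalIntegral.integral_eq_zero_iff_of_le_of_nonneg_ae hlr haw0 hint).1 h.symm
  rw [← restrict_Ioo_eq_restrict_Ioc] at hzero
  filter_upwards [hzero, ae_restrict_mem measurableSet_Ioo] with x hx hxlr
  exact (mul_eq_zero.1 hx).resolve_right (hw0 x hxlr).ne'

namespace DirichletEigenpair

variable {a : ℝ → ℝ} {l r lam : ℝ}

theorem exists_isSolIcc (hp : DirichletEigenpair a l r lam) (hlr : l ≤ r)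
    (ha : IntervalIntegrable a volume l r) :
    ∃ φ φ' : ℝ → ℝ, IsSolIcc (fun t ↦ lam * (a t * φ t)) l r φ φ' ∧ (∀ x ∈ Ioo l r, 0 < φ x) ∧
      (∀ x ∈ Icc l r, 0 ≤ φ x) ∧ φ l = 0 ∧ φ r = 0 := by
  obtain ⟨φ, φ', hφ, hφ', hpos, hφl, hφr, heq⟩ := hp
  refine ⟨φ, φ', .of_deriv_eq_left ?_ hφ hφ' ?_, hpos, fun x hx ↦ ?_, hφl, hφr⟩
  · refine (ha.mul_continuousOn ?_).const_mul lam
    rw [uIcc_of_le hlr]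
    exact fun x hx ↦ (hφ x hx).continuousWithinAt
  · intro x hx
    rw [heq x hx, intervalIntegral.integral_const_mul]
  · rcases hx.1.eq_or_lt with rfl | hlx
    · exact hφl.ge
    rcases hx.2.eq_or_lt with rfl | hxr
    · exact hφr.ge
    exact (hpos x ⟨hlx, hxr⟩).le

theorem integral_mul_le {φ φ' u u' h : ℝ → ℝ} (hφ : IsSolIcc (fun t ↦ lam * (a t * φ t)) l r φ φ')
    (hφ0 : ∀ x ∈ Icc l r, 0 ≤ φ x) (hφl : φ l = 0) (hφr : φ r = 0) (hlr : l < r)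
    (ha : IntervalIntegrable a volume l r) (hh : ContinuousOn h (Icc l r))
    (hs : IsSolIcc (fun t ↦ a t * h t) l r u u') (hu0 : ∀ x ∈ Icc l r, 0 ≤ u x) :
    ∫ x in l..r, a x * φ x * (h x - lam * u x) ≤ 0 := by
  have hl : l ∈ Icc l r := left_mem_Icc.2 hlr.le
  have hr : r ∈ Icc l r := right_mem_Icc.2 hlr.le
  have hIcc := uIcc_of_le hlr.le
  have hsign : ∀ x ∈ Icc l r, φ x = 0 → ∀ y ∈ Icc l r, 0 ≤ φ' x * (y - x) := by
    intro x hx hφx y hy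
    have := mul_sub_nonpos_of_isMaxOn_Icc (hφ.hasDerivWithinAt x hx).neg
      (fun z hz ↦ by simpa [hφx] using hφ0 z hz) hx hy
    linarith
  have hφ'l : 0 ≤ φ' l := nonneg_of_mul_nonneg_left (hsign l hl hφl r hr) (sub_pos.2 hlr)
  have hφ'r : φ' r ≤ 0 := nonpos_of_mul_nonneg_left (hsign r hr hφr l hl) (sub_neg.2 hlr)
  have hgreen := hs.green hφ hlr.le (ha.mul_continuousOn (hIcc ▸ hh))
    ((ha.mul_continuousOn (hIcc ▸ hφ.continuousOn)).const_mul lam)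
  calc ∫ x in l..r, a x * φ x * (h x - lam * u x)
      = ∫ x in l..r, (a x * h x * φ x - lam * (a x * φ x) * u x) := by congr 1 with x; ring
    _ = φ' r * u r - φ' l * u l := by rw [hgreen, hφl, hφr]; ring
    _ ≤ 0 := sub_nonpos.2 ((mul_nonpos_of_nonpos_of_nonneg hφ'r (hu0 r hr)).trans
        (mul_nonneg hφ'l (hu0 l hl)))

-- By concavity `u` dominates a multiple of its maximum times `q x = (x - l) (r - x) / (r - l) ^ 2`,
-- so testing the equation with the eigenfunction bounds that maximum when `lam < κ`.
theorem exists_forall_le (hp : DirichletEigenpair a l r lam) (hlr : l < r)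
    (ha : IntervalIntegrable a volume l r) (ha0 : ∀ᵐ x ∂volume.restrict (Icc l r), 0 ≤ a x)
    (hane : ¬ ∀ᵐ x ∂volume.restrict (Icc l r), a x = 0) {κ : ℝ} (hκ : lam < κ) (s₀ : ℝ) :
    ∃ R : ℝ, ∀ u u' h : ℝ → ℝ, ContinuousOn h (Icc l r) → (∀ x ∈ Icc l r, 0 ≤ h x) →
      (∀ x ∈ Icc l r, κ * (u x - s₀) ≤ h x) → IsSolIcc (fun t ↦ a t * h t) l r u u' →
      (∀ x ∈ Icc l r, 0 ≤ u x) → ∀ x ∈ Icc l r, u x ≤ R := by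
  obtain ⟨φ, φ', hφ, hφpos, hφ0, hφl, hφr⟩ := hp.exists_isSolIcc hlr.le ha
  have hIcc := uIcc_of_le hlr.le
  have hL : 0 < r - l := sub_pos.2 hlr
  set q : ℝ → ℝ := fun x ↦ (x - l) * (r - x) / (r - l) ^ 2
  have hqc : Continuous q := by fun_prop
  have haφ : IntervalIntegrable (fun t ↦ a t * φ t) volume l r :=
    ha.mul_continuousOn (hIcc ▸ hφ.continuousOn)
  have haφq : IntervalIntegrable (fun t ↦ a t * φ t * q t) volume l r :=
    haφ.mul_continuousOn hqc.continuousOn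
  have hpos : 0 < ∫ t in l..r, a t * φ t * q t := by
    simp only [mul_assoc]
    refine integral_mul_pos_of_not_ae_eq_zero hlr.le ha ha0 hane
      (hφ.continuousOn.mul hqc.continuousOn) fun x hx ↦ mul_pos (hφpos x hx) ?_
    exact div_pos (mul_pos (sub_pos.2 hx.1) (sub_pos.2 hx.2)) (pow_pos hL 2)
  refine ⟨κ * s₀ * (∫ t in l..r, a t * φ t) / ((κ - lam) * ∫ t in l..r, a t * φ t * q t),
    fun u u' h hh hh0 hκh hs hu0 z hz ↦ ?_⟩
  have hconc : ConcaveOn ℝ (Icc l r) u := hs.concaveOn (by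
    filter_upwards [ha0, ae_restrict_mem measurableSet_Icc] with x hax hx
    exact mul_nonneg hax (hh0 x hx))
  have hlower : ∫ x in l..r, ((κ - lam) * u z * (a x * φ x * q x) - κ * s₀ * (a x * φ x)) ≤
      ∫ x in l..r, a x * φ x * (h x - lam * u x) := by
    refine intervalIntegral.integral_mono_ae_restrict hlr.le
      ((haφq.const_mul _).sub (haφ.const_mul _)) (haφ.mul_continuousOn
        (hIcc ▸ hh.sub (hs.continuousOn.const_mul lam))) ?_
    filter_upwards [ha0, ae_restrict_mem measurableSet_Icc] with x hax hx
    have huq : u z * q x ≤ u x := mul_sub_mul_sub_div_sq_le_of_concaveOn hlr hconc hu0 hx hz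
    have hle : (κ - lam) * (u z * q x) - κ * s₀ ≤ h x - lam * u x := by
      linarith [mul_le_mul_of_nonneg_left huq (sub_pos.2 hκ).le, hκh x hx]
    calc _ = a x * φ x * ((κ - lam) * (u z * q x) - κ * s₀) := by ring
      _ ≤ _ := mul_le_mul_of_nonneg_left hle (mul_nonneg hax (hφ0 x hx))
  rw [intervalIntegral.integral_sub (haφq.const_mul _) (haφ.const_mul _),
    intervalIntegral.integral_const_mul, intervalIntegral.integral_const_mul] at hlower
  rw [le_div_iff₀ (mul_pos (sub_pos.2 hκ) hpos)]
  linarith [integral_mul_le hφ hφ0 hφl hφr hlr ha hh hs hu0]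

end DirichletEigenpair

/-! ### Solutions meeting the nonpositive half-line -/

/-- An extension by zero to `(-∞, 0]` of a nonlinearity positive on `(0, ∞)`, with linear growth
at most `K`. The extension makes nonpositive states move freely, so that every solution is
global. -/
structure IsNonlinearity (g : ℝ → ℝ) (K : ℝ) : Prop where
  continuous : Continuous g
  eq_zero : ∀ s ≤ 0, g s = 0
  pos : ∀ s, 0 < s → 0 < g s
  le_mul : ∀ s, 0 ≤ s → g s ≤ K * s

namespace IsNonlinearity

variable {g : ℝ → ℝ} {K : ℝ}

theorem coeff_pos (hg : IsNonlinearity g K) : 0 < K := by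
  linarith [hg.pos 1 one_pos, hg.le_mul 1 zero_le_one]

theorem nonneg (hg : IsNonlinearity g K) (s : ℝ) : 0 ≤ g s := by
  rcases le_or_gt s 0 with hs | hs
  · exact (hg.eq_zero s hs).ge
  · exact (hg.pos s hs).le

theorem le_of_le (hg : IsNonlinearity g K) {s t : ℝ} (hst : s ≤ t) (ht : 0 ≤ t) :
    g s ≤ K * t := by
  rcases le_or_gt s 0 with hs | hs
  · exact (hg.eq_zero s hs).trans_le (mul_nonneg hg.coeff_pos.le ht)
  · exact (hg.le_mul s hs.le).trans (mul_le_mul_of_nonneg_left hst hg.coeff_pos.le)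

theorem abs_le_of_le (hg : IsNonlinearity g K) {s t : ℝ} (hst : s ≤ t) (ht : 0 ≤ t) :
    |g s| ≤ K * t := by
  rw [abs_of_nonneg (hg.nonneg s)]
  exact hg.le_of_le hst ht

theorem abs_le (hg : IsNonlinearity g K) (s : ℝ) : |g s| ≤ K * |s| :=
  hg.abs_le_of_le (le_abs_self s) (abs_nonneg s)

end IsNonlinearity

namespace IsSolIcc

variable {f g a u u' : ℝ → ℝ} {l r K : ℝ}

theorem sub_affine (hs : IsSolIcc f l r u u') (c d : ℝ) :
    IsSolIcc f l r (fun x ↦ u x - (c + d * (x - l))) fun x ↦ u' x - d := by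
  refine ⟨fun x hx ↦ (hs.hasDerivWithinAt x hx).sub ?_,
    hs.continuousOn_deriv.sub continuousOn_const, fun x hx y hy ↦ ?_⟩
  · simpa using ((((hasDerivAt_id x).sub_const l).const_mul d).const_add c).hasDerivWithinAt
  · rw [hs.deriv_eq x hx y hy]
    ring

theorem eq_affine_of_nonpos (hg : IsNonlinearity g K) (ha : IntervalIntegrable a volume l r)
    (hs : IsSolIcc (fun t ↦ a t * g (u t)) l r u u') (hu : u l ≤ 0) (hu' : u' l ≤ 0) {x : ℝ}
    (hx : x ∈ Icc l r) : u x = u l + u' l * (x - l) ∧ u' x = u' l := by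
  obtain ⟨E, -, hE⟩ := exists_forall_abs_add_abs_deriv_le hg.coeff_pos.le ha
  have hle : ∀ y ∈ Icc l r, u y ≤ u y - (u l + u' l * (y - l)) := fun y hy ↦ by
    linarith [mul_nonpos_of_nonpos_of_nonneg hu' (sub_nonneg.2 hy.1)]
  have key := hE _ _ _ (hs.sub_affine (u l) (u' l))
    (fun y hy ↦ hg.abs_le_of_le ((hle y hy).trans (le_abs_self _)) (abs_nonneg _))
    l (left_mem_Icc.2 (hx.1.trans hx.2)) x hx
  simp only [sub_self, mul_zero, add_zero, abs_zero] at key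
  constructor
  · exact sub_eq_zero.1 (abs_nonpos_iff.1 (by linarith [abs_nonneg (u' x - u' l)]))
  · refine sub_eq_zero.1 (abs_nonpos_iff.1 ?_)
    linarith [abs_nonneg (u x - (u l + u' l * (x - l)))]

theorem eq_zero_of_eq_zero (hg : IsNonlinearity g K) (ha : IntervalIntegrable a volume l r)
    (hs : IsSolIcc (fun t ↦ a t * g (u t)) l r u u') {x y : ℝ} (hx : x ∈ Icc l r)
    (hy : y ∈ Icc l r) (hu : u x = 0) (hu' : u' x = 0) : u y = 0 ∧ u' y = 0 := by
  obtain ⟨E, -, hE⟩ := exists_forall_abs_add_abs_deriv_le hg.coeff_pos.le ha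
  have key := hE u u' _ hs (fun z _ ↦ hg.abs_le (u z)) x hx y hy
  rw [hu, hu', abs_zero, add_zero, mul_zero] at key
  exact ⟨abs_nonpos_iff.1 (by linarith [abs_nonneg (u' y)]),
    abs_nonpos_iff.1 (by linarith [abs_nonneg (u y)])⟩

end IsSolIcc

theorem exists_pos_of_hasDerivWithinAt_Icc {u : ℝ → ℝ} {l r d : ℝ} (hlr : l < r)
    (hu : HasDerivWithinAt u d (Icc l r) l) (h0 : 0 ≤ u l) (hpos : 0 < u l ∨ 0 < d) :
    ∃ z ∈ Icc l r, 0 < u z := by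
  by_contra! hle
  have hl : l ∈ Icc l r := left_mem_Icc.2 hlr.le
  have hd : d * (r - l) ≤ 0 := mul_sub_nonpos_of_isMaxOn_Icc hu
    (fun z hz ↦ (hle z hz).trans h0) hl (right_mem_Icc.2 hlr.le)
  rcases hpos with hpos | hpos
  · exact hpos.not_ge (hle l hl)
  · exact (mul_pos hpos (sub_pos.2 hlr)).not_ge hd

theorem exists_first_zero {u : ℝ → ℝ} {z x : ℝ} (hzx : z ≤ x) (hu : ContinuousOn u (Icc z x))
    (hz : 0 < u z) (hx : u x ≤ 0) : ∃ y ∈ Ioc z x, u y = 0 ∧ ∀ t ∈ Icc z y, 0 ≤ u t := by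
  have hcomp : IsCompact (Icc z x ∩ u ⁻¹' Iic 0) := isCompact_Icc.of_isClosed_subset
    (hu.preimage_isClosed_of_isClosed isClosed_Icc isClosed_Iic) inter_subset_left
  obtain ⟨y, ⟨hy, huy⟩, hmin⟩ := hcomp.exists_isLeast ⟨x, right_mem_Icc.2 hzx, hx⟩
  obtain ⟨w, hw, huw⟩ := intermediate_value_Icc' hy.1 (hu.mono (Icc_subset_Icc_right hy.2))
    ⟨huy, hz.le⟩
  have hyw : y ≤ w := hmin ⟨⟨hw.1, hw.2.trans hy.2⟩, huw.le⟩
  have huy0 : u y = 0 := by rwa [hyw.antisymm hw.2]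
  refine ⟨y, ⟨hy.1.lt_of_ne fun h ↦ hz.not_ge (h ▸ huy), hy.2⟩, huy0, fun t ht ↦ ?_⟩
  rcases ht.2.eq_or_lt with rfl | hty
  · exact huy0.ge
  · by_contra! htneg
    exact hty.not_ge (hmin ⟨⟨ht.1, ht.2.trans hy.2⟩, htneg.le⟩)

-- At its first zero the solution has negative slope, and from there on it moves freely.
theorem IsSolIcc.nonpos_and_deriv_neg_of_nonpos {g a u u' : ℝ → ℝ} {l r K x : ℝ}
    (hg : IsNonlinearity g K) (ha : IntervalIntegrable a volume l r)
    (hs : IsSolIcc (fun t ↦ a t * g (u t)) l r u u') (h0 : 0 ≤ u l) (hpos : 0 < u l ∨ 0 < u' l)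
    (hx : x ∈ Ioc l r) (hux : u x ≤ 0) : u r ≤ 0 ∧ u' r < 0 := by
  have hl : l ∈ Icc l r := left_mem_Icc.2 (hx.1.le.trans hx.2)
  obtain ⟨z, hz, huz⟩ := exists_pos_of_hasDerivWithinAt_Icc hx.1
    ((hs.mono le_rfl hx.2).hasDerivWithinAt l (left_mem_Icc.2 hx.1.le)) h0 hpos
  obtain ⟨y, hy, huy, hnonneg⟩ := exists_first_zero hz.2
    (hs.continuousOn.mono (Icc_subset_Icc hz.1 hx.2)) huz hux
  have hylr : y ∈ Icc l r := ⟨hz.1.trans hy.1.le, hy.2.trans hx.2⟩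
  have hy' : u' y ≠ 0 := by
    intro h
    obtain ⟨h₁, h₂⟩ := hs.eq_zero_of_eq_zero hg ha hylr hl huy h
    rcases hpos with hpos | hpos <;> linarith
  have hy'le : u' y ≤ 0 := by
    have hd := ((hs.mono hz.1 hylr.2).hasDerivWithinAt y (right_mem_Icc.2 hy.1.le)).neg
    have := mul_sub_nonpos_of_isMaxOn_Icc hd (fun t ht ↦ by simpa [huy] using hnonneg t ht)
      (right_mem_Icc.2 hy.1.le) (left_mem_Icc.2 hy.1.le)
    nlinarith [hy.1]
  obtain ⟨hur, hu'r⟩ := (hs.mono hylr.1 le_rfl).eq_affine_of_nonpos hg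
    (intervalIntegrable_of_mem_Icc ha hylr ⟨hylr.1.trans hylr.2, le_rfl⟩) huy.le hy'le
    (right_mem_Icc.2 hylr.2)
  rw [hur, hu'r, huy, zero_add]
  exact ⟨mul_nonpos_of_nonpos_of_nonneg hy'le (sub_nonneg.2 hylr.2), hy'le.lt_of_ne hy'⟩

/-! ### Small and large initial data -/

namespace IsSolIcc

variable {a h u u' : ℝ → ℝ} {l r C : ℝ}

theorem abs_deriv_sub_le (ha : IntervalIntegrable a volume l r)
    (hs : IsSolIcc (fun t ↦ a t * h t) l r u u') (hC : ∀ x ∈ Icc l r, |h x| ≤ C) {x : ℝ}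
    (hx : x ∈ Icc l r) : |u' x - u' l| ≤ C * ∫ t in l..r, |a t| := by
  have hl : l ∈ Icc l r := left_mem_Icc.2 (hx.1.trans hx.2)
  have hC0 : 0 ≤ C := (abs_nonneg _).trans (hC l hl)
  rw [hs.deriv_eq l hl x hx, sub_sub_cancel_left, abs_neg]
  calc |∫ t in l..x, a t * h t| ≤ ∫ t in l..x, C * |a t| := by
        refine intervalIntegral.norm_integral_le_of_norm_le (μ := volume)
          (f := fun t ↦ a t * h t) (g := fun t ↦ C * |a t|) hx.1 (ae_of_all _ fun t ht ↦ ?_)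
          ((intervalIntegrable_of_mem_Icc ha hl hx).abs.const_mul C)
        rw [Real.norm_eq_abs, abs_mul, mul_comm]
        exact mul_le_mul_of_nonneg_right (hC t ⟨ht.1.le, ht.2.trans hx.2⟩) (abs_nonneg _)
    _ = C * ∫ t in l..x, |a t| := intervalIntegral.integral_const_mul _ _
    _ ≤ C * ∫ t in l..r, |a t| := mul_le_mul_of_nonneg_left
        (intervalIntegral.integral_mono_interval le_rfl hx.1 hx.2
          (ae_of_all _ fun t ↦ abs_nonneg (a t)) ha.abs) hC0

theorem abs_deriv_left_le (hlr : l < r) (ha : IntervalIntegrable a volume l r)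
    (hs : IsSolIcc (fun t ↦ a t * h t) l r u u') (hC : ∀ x ∈ Icc l r, |h x| ≤ C) :
    |u' l| ≤ |u r - u l| / (r - l) + C * ∫ t in l..r, |a t| := by
  have hL : 0 < r - l := sub_pos.2 hlr
  have hdev := hs.abs_sub_sub_mul_le (fun x hx ↦ hs.abs_deriv_sub_le ha hC hx)
    (right_mem_Icc.2 hlr.le)
  rw [abs_sub_comm] at hdev
  have hmul : |u' l| * (r - l) ≤ |u r - u l| + (C * ∫ t in l..r, |a t|) * (r - l) := by
    rw [← abs_of_pos hL, ← abs_mul, abs_of_pos hL]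
    linarith [abs_sub_abs_le_abs_sub (u' l * (r - l)) (u r - u l)]
  rw [← sub_le_iff_le_add, le_div_iff₀ hL]
  linarith

end IsSolIcc

/-- Solutions whose initial data lie on the arc `u 0 + |u' 0| = R`, `0 ≤ u 0`, reach the end of
`[0, T]` nonpositive and decreasing, unless they start with `u 0 = 0` and `u' 0 ≤ 0`. -/
def IsOuterRadius (T : ℝ) (a g : ℝ → ℝ) (R : ℝ) : Prop :=
  ∀ u u' : ℝ → ℝ, IsSolIcc (fun t ↦ a t * g (u t)) 0 T u u' → 0 ≤ u 0 → (0 < u 0 ∨ 0 < u' 0) →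
    u 0 + |u' 0| = R → u T ≤ 0 ∧ u' T < 0

/-- Solutions whose initial data lie on the arc `u 0 + |u' 0| = r`, `0 ≤ u 0`, behave like
those of `u'' = 0`, except that a nearly constant one increases its slope. -/
structure IsInnerRadius (T : ℝ) (a g : ℝ → ℝ) (r : ℝ) : Prop where
  pos : 0 < r
  pos_right : ∀ u u' : ℝ → ℝ, IsSolIcc (fun t ↦ a t * g (u t)) 0 T u u' → u 0 = 0 → u' 0 = r →
    0 < u T
  deriv_lt : ∀ u u' : ℝ → ℝ, IsSolIcc (fun t ↦ a t * g (u t)) 0 T u u' → 0 ≤ u 0 →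
    u 0 + |u' 0| = r → (u' 0 = 0 ∨ u T = u 0) → u' 0 < u' T

section

variable {T K : ℝ} {a g : ℝ → ℝ}

theorem eventually_isOuterRadius {l r R₁ : ℝ} (hg : IsNonlinearity g K)
    (ha : IntervalIntegrable a volume 0 T) (hl : 0 ≤ l) (hlr : l < r) (hr : r ≤ T)
    (hR : ∀ u u' : ℝ → ℝ, IsSolIcc (fun t ↦ a t * g (u t)) l r u u' →
      (∀ x ∈ Icc l r, 0 ≤ u x) → ∀ x ∈ Icc l r, u x ≤ R₁) :
    ∀ᶠ R in atTop, IsOuterRadius T a g R := by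
  have hlT : l ∈ Icc 0 T := ⟨hl, hlr.le.trans hr⟩
  have h0T : (0 : ℝ) ∈ Icc 0 T := left_mem_Icc.2 (hl.trans hlT.2)
  have halr := intervalIntegrable_of_mem_Icc ha hlT ⟨hl.trans hlr.le, hr⟩
  obtain ⟨E, hE1, hE⟩ := exists_forall_abs_add_abs_deriv_le hg.coeff_pos.le ha
  filter_upwards [eventually_gt_atTop
    (E * (R₁ + (R₁ / (r - l) + K * R₁ * ∫ t in l..r, |a t|)))] with R hRlt u u' hs h0 hpos hu0
  by_contra hcon
  have hu : ∀ x ∈ Icc 0 T, 0 ≤ u x := by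
    intro x hx
    rcases hx.1.eq_or_lt with rfl | hx0
    · exact h0
    by_contra! hux
    exact hcon (hs.nonpos_and_deriv_neg_of_nonpos hg ha h0 hpos ⟨hx0, hx.2⟩ hux.le)
  have hulr : ∀ x ∈ Icc l r, 0 ≤ u x := fun x hx ↦ hu x ⟨hl.trans hx.1, hx.2.trans hr⟩
  have hub := hR u u' (hs.mono hl hr) hulr
  have hl' : l ∈ Icc l r := left_mem_Icc.2 hlr.le
  have hr' : r ∈ Icc l r := right_mem_Icc.2 hlr.le
  have hgrow := hE u u' _ hs (fun x _ ↦ hg.abs_le (u x)) l hlT 0 h0T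
  have hslope := (hs.mono hl hr).abs_deriv_left_le (C := K * R₁) hlr halr fun x hx ↦
    hg.abs_le_of_le (hub x hx) ((hulr x hx).trans (hub x hx))
  have hdiff : |u r - u l| ≤ R₁ := abs_sub_le_of_nonneg_of_le (hulr r hr') (hub r hr')
    (hulr l hl') (hub l hl')
  have hdata : |u l| + |u' l| ≤ R₁ + (R₁ / (r - l) + K * R₁ * ∫ t in l..r, |a t|) := by
    rw [abs_of_nonneg (hulr l hl')]
    refine add_le_add (hub l hl') (hslope.trans (add_le_add_left ?_ _))
    exact div_le_div_of_nonneg_right hdiff (sub_pos.2 hlr).le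
  rw [abs_of_nonneg h0, hu0] at hgrow
  linarith [mul_le_mul_of_nonneg_left hdata (zero_le_one.trans hE1)]

theorem IsNonlinearity.eventually_abs_le_mul (hg : IsNonlinearity g K)
    (hg0 : Tendsto (fun s ↦ g s / s) (nhdsWithin 0 (Ioi 0)) (nhds 0)) {ε : ℝ} (hε : 0 < ε) :
    ∀ᶠ p in nhdsWithin 0 (Ioi 0), ∀ s ≤ p, |g s| ≤ ε * p := by
  obtain ⟨s₁, hs₁ : 0 < s₁, hsub⟩ :=
    (mem_nhdsGT_iff_exists_Ioc_subset).1 (hg0.eventually (gt_mem_nhds hε))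
  filter_upwards [Ioc_mem_nhdsGT hs₁] with p hp s hsp
  rw [abs_of_nonneg (hg.nonneg s)]
  rcases le_or_gt s 0 with hs | hs
  · exact (hg.eq_zero s hs).trans_le (mul_pos hε hp.1).le
  · have : g s / s < ε := hsub ⟨hs, hsp.trans hp.2⟩
    exact ((div_lt_iff₀ hs).1 this).le.trans (mul_le_mul_of_nonneg_left hsp hε.le)

theorem eventually_abs_sub_affine_le (hT : 0 ≤ T) (hg : IsNonlinearity g K)
    (hg0 : Tendsto (fun s ↦ g s / s) (nhdsWithin 0 (Ioi 0)) (nhds 0))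
    (ha : IntervalIntegrable a volume 0 T) {ε : ℝ} (hε : 0 < ε) :
    ∀ᶠ p in nhdsWithin 0 (Ioi 0), ∀ u u' : ℝ → ℝ, IsSolIcc (fun t ↦ a t * g (u t)) 0 T u u' →
      0 ≤ u 0 → u 0 + |u' 0| = p → ∀ x ∈ Icc 0 T, |u x - u 0 - u' 0 * x| ≤ ε * p := by
  obtain ⟨E, hE1, hE⟩ := exists_forall_abs_add_abs_deriv_le hg.coeff_pos.le ha
  have hE0 : 0 < E := zero_lt_one.trans_le hE1
  set A := ∫ t in (0 : ℝ)..T, |a t|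
  have hA : 0 ≤ A := intervalIntegral.integral_nonneg hT fun t _ ↦ abs_nonneg (a t)
  have hscale : Tendsto (fun p ↦ E * p) (nhdsWithin 0 (Ioi 0)) (nhdsWithin 0 (Ioi 0)) := by
    refine tendsto_nhdsWithin_iff.2 ⟨?_, ?_⟩
    · exact ((continuous_const_mul E).tendsto' 0 0 (mul_zero E)).mono_left nhdsWithin_le_nhds
    · filter_upwards [self_mem_nhdsWithin] with p hp using mul_pos hE0 hp
  have hε₁ : 0 < ε / (E * A * T + 1) := by positivity
  filter_upwards [hscale.eventually (hg.eventually_abs_le_mul hg0 hε₁), self_mem_nhdsWithin]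
    with p hgp hp u u' hs h0 hu0 x hx
  have hup : ∀ y ∈ Icc 0 T, u y ≤ E * p := by
    intro y hy
    have := hE u u' _ hs (fun z _ ↦ hg.abs_le (u z)) 0 (left_mem_Icc.2 hT) y hy
    rw [abs_of_nonneg h0, hu0] at this
    linarith [le_abs_self (u y), abs_nonneg (u' y)]
  have hdev := hs.abs_sub_sub_mul_le
    (fun y hy ↦ hs.abs_deriv_sub_le ha (fun z hz ↦ hgp (u z) (hup z hz)) hy) hx
  rw [sub_zero] at hdev
  have hp0 : 0 ≤ p := le_of_lt hp
  calc |u x - u 0 - u' 0 * x| ≤ ε / (E * A * T + 1) * (E * p) * A * x := hdev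
    _ ≤ ε / (E * A * T + 1) * (E * p) * A * T := by gcongr; exact hx.2
    _ = ε / (E * A * T + 1) * (E * A * T) * p := by ring
    _ ≤ ε / (E * A * T + 1) * (E * A * T + 1) * p := by gcongr; linarith
    _ = ε * p := by rw [div_mul_cancel₀ _ (by positivity)]

theorem RegOscAtZero.exists_integral_neg (hreg : RegOscAtZero g) (hgc : Continuous g)
    (hpos : ∀ s, 0 < s → 0 < g s) (hT : 0 ≤ T) (ha : IntervalIntegrable a volume 0 T)
    (hneg : ∫ x in (0 : ℝ)..T, a x < 0) :
    ∃ δ > 0, ∃ η > 0, ∀ (c : ℝ) (u : ℝ → ℝ), 0 < c → c < δ → ContinuousOn u (Icc 0 T) →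
      (∀ x ∈ Icc 0 T, |u x - c| < η * c) → ∫ t in (0 : ℝ)..T, a t * g (u t) < 0 := by
  set A := ∫ t in (0 : ℝ)..T, |a t|
  set I := ∫ t in (0 : ℝ)..T, a t
  have hA : 0 ≤ A := intervalIntegral.integral_nonneg hT fun t _ ↦ abs_nonneg (a t)
  obtain ⟨δ, hδ, η, hη, hosc⟩ := hreg (-I / (A + 1)) (by have := neg_pos.2 hneg; positivity)
  refine ⟨δ, hδ, η, hη, fun c u hc hcδ hu huc ↦ ?_⟩
  have hgc0 : 0 < g c := hpos c hc
  have hclose : ∀ x ∈ Icc 0 T, |g (u x) - g c| ≤ -I / (A + 1) * g c := by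
    intro x hx
    have hω : |u x / c - 1| < η := by
      rw [div_sub_one hc.ne', abs_div, abs_of_pos hc, div_lt_iff₀ hc]
      exact huc x hx
    have := hosc c (u x / c) hc hcδ hω
    rw [div_mul_cancel₀ _ hc.ne', div_sub_one hgc0.ne', abs_div, abs_of_pos hgc0,
      div_lt_iff₀ hgc0] at this
    exact this.le
  have hle : ∫ t in (0 : ℝ)..T, a t * g (u t) ≤
      ∫ t in (0 : ℝ)..T, (a t * g c + |a t| * (-I / (A + 1) * g c)) := by
    refine intervalIntegral.integral_mono_on hT (ha.mul_continuousOn ?_)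
      ((ha.mul_const _).add (ha.abs.mul_const _)) fun t ht ↦ ?_
    · rw [uIcc_of_le hT]
      exact hgc.comp_continuousOn hu
    · have : a t * (g (u t) - g c) ≤ |a t| * (-I / (A + 1) * g c) :=
        (le_abs_self _).trans ((abs_mul _ _).trans_le
          (mul_le_mul_of_nonneg_left (hclose t ht) (abs_nonneg _)))
      linarith
  rw [intervalIntegral.integral_add (ha.mul_const _) (ha.abs.mul_const _),
    intervalIntegral.integral_mul_const, intervalIntegral.integral_mul_const] at hle
  calc _ ≤ I * g c + A * (-I / (A + 1) * g c) := hle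
    _ = I * g c / (A + 1) := by field_simp; ring
    _ < 0 := div_neg_of_neg_of_pos (mul_neg_of_neg_of_pos hneg hgc0) (by positivity)

theorem eventually_isInnerRadius (hT : 0 < T) (hg : IsNonlinearity g K) (hreg : RegOscAtZero g)
    (hg0 : Tendsto (fun s ↦ g s / s) (nhdsWithin 0 (Ioi 0)) (nhds 0))
    (ha : IntervalIntegrable a volume 0 T) (hneg : ∫ x in (0 : ℝ)..T, a x < 0) :
    ∀ᶠ r in nhdsWithin 0 (Ioi 0), IsInnerRadius T a g r := by
  have h0T : (0 : ℝ) ∈ Icc 0 T := left_mem_Icc.2 hT.le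
  have hTT : T ∈ Icc 0 T := right_mem_Icc.2 hT.le
  obtain ⟨δ, hδ, η, hη, hint⟩ := hreg.exists_integral_neg hg.continuous hg.pos hT.le ha hneg
  set ε := min (T / 4) (η / 8)
  have hεT : ε ≤ T / 4 := min_le_left _ _
  have hεη : ε ≤ η / 8 := min_le_right _ _
  filter_upwards [eventually_abs_sub_affine_le hT.le hg hg0 ha (ε := ε) (by positivity),
    Ioo_mem_nhdsGT hδ] with r hdev ⟨hr, hrδ⟩
  refine ⟨hr, fun u u' hs hu hu' ↦ ?_, fun u u' hs hu hur hor ↦ ?_⟩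
  · have := (abs_le.1 (hdev u u' hs hu.ge (by rw [hu, hu', zero_add, abs_of_pos hr]) T hTT)).1
    rw [hu, hu'] at this
    nlinarith [mul_pos hr hT]
  have hslopeT : |u' 0| * T ≤ ε * r := by
    rcases hor with hu' | huT
    · rw [hu', abs_zero, zero_mul]
      positivity
    · simpa [huT, abs_mul, abs_of_pos hT] using hdev u u' hs hu hur T hTT
  have hslope : |u' 0| ≤ r / 4 := le_of_mul_le_mul_right (by nlinarith) hT
  have hr2 : r ≤ 2 * u 0 := by linarith
  have hclose : ∀ x ∈ Icc 0 T, |u x - u 0| < η * u 0 := by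
    intro x hx
    have haff : |u' 0 * x| ≤ ε * r := by
      rw [abs_mul, abs_of_nonneg hx.1]
      exact (mul_le_mul_of_nonneg_left hx.2 (abs_nonneg _)).trans hslopeT
    calc |u x - u 0| = |(u x - u 0 - u' 0 * x) + u' 0 * x| := by rw [sub_add_cancel]
      _ ≤ ε * r + ε * r := (abs_add_le _ _).trans (add_le_add (hdev u u' hs hu hur x hx) haff)
      _ ≤ η / 8 * (2 * u 0) + η / 8 * (2 * u 0) := by gcongr
      _ < η * u 0 := by nlinarith
  have := hint (u 0) u (by linarith) (by linarith [abs_nonneg (u' 0)]) hs.continuousOn hclose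
  rw [hs.deriv_eq 0 h0T T hTT]
  linarith

end

/-! ### Approximation of the time-`T` map by delayed equations -/

/-- The slope at `x` of the solution of `v''(x) + a(x) g(u(x - h)) = 0` with `v' 0 = d`. The
history `u` is frozen at `u 0` before time `0`. -/
noncomputable def delayedSlope (a g : ℝ → ℝ) (h : ℝ) (u : ℝ → ℝ) (d x : ℝ) : ℝ :=
  d - ∫ t in (0 : ℝ)..x, a t * g (u (max (t - h) 0))

/-- Picard iterates of the delayed equation `u''(x) + a(x) g(u(x - h)) = 0` with
`(u 0, u' 0) = p`. -/
noncomputable def delayedPicard (a g : ℝ → ℝ) (h : ℝ) (p : ℝ × ℝ) : ℕ → ℝ → ℝ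
  | 0, _ => p.1
  | k + 1, x => p.1 + ∫ s in (0 : ℝ)..x, delayedSlope a g h (delayedPicard a g h p k) p.2 s

section

variable {a g : ℝ → ℝ} {M h : ℝ}

theorem continuous_delayedSlope {X : Type*} [TopologicalSpace X] [FirstCountableTopology X]
    {W : X → ℝ → ℝ} {d : X → ℝ} (ha : Integrable a) (hg : Continuous g) (hM : ∀ s, |g s| ≤ M)
    (hW : Continuous fun q : X × ℝ ↦ W q.1 q.2) (hd : Continuous d) :
    Continuous fun q : X × ℝ ↦ delayedSlope a g h (W q.1) (d q.1) q.2 := by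
  refine (hd.comp continuous_fst).sub (continuous_iff_continuousAt.2 fun ⟨p, b⟩ ↦ ?_)
  have hgW : Continuous fun q : X × ℝ ↦ g (W q.1 (max (q.2 - h) 0)) :=
    hg.comp (hW.comp (continuous_fst.prodMk ((continuous_snd.sub continuous_const).max
      continuous_const)))
  refine intervalIntegral.continuousAt_parametric_primitive_of_dominated
    (F := fun p t ↦ a t * g (W p (max (t - h) 0))) (fun t ↦ |a t| * M) (-(1 + |b|)) (1 + |b|)
    (fun p ↦ ?_) (Eventually.of_forall fun p ↦ ae_of_all _ fun t ↦ ?_)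
    (ha.abs.mul_const M).intervalIntegrable (ae_of_all _ fun t ↦ ?_) ?_ ?_
    (measure_singleton b)
  · exact (ha.aestronglyMeasurable.mul
      (hgW.comp (Continuous.prodMk_right p)).aestronglyMeasurable).restrict
  · rw [Real.norm_eq_abs, abs_mul]
    exact mul_le_mul_of_nonneg_left (hM _) (abs_nonneg _)
  · exact (continuous_const.mul (hgW.comp (Continuous.prodMk_left t))).continuousAt
  · constructor <;> linarith [abs_nonneg b]
  · constructor <;> linarith [neg_abs_le b, le_abs_self b]

theorem continuous_delayedPicard (ha : Integrable a) (hg : Continuous g) (hM : ∀ s, |g s| ≤ M)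
    (k : ℕ) : Continuous fun q : (ℝ × ℝ) × ℝ ↦ delayedPicard a g h q.1 k q.2 := by
  induction k with
  | zero => exact continuous_fst.fst
  | succ k ih =>
    exact continuous_fst.fst.add
      (intervalIntegral.continuous_parametric_primitive_of_continuous
        (f := fun p s ↦ delayedSlope a g h (delayedPicard a g h p k) p.2 s)
        (continuous_delayedSlope (W := fun p ↦ delayedPicard a g h p k) ha hg hM ih
          continuous_snd))

theorem continuous_delayedSlope_delayedPicard (ha : Integrable a) (hg : Continuous g)
    (hM : ∀ s, |g s| ≤ M) (k : ℕ) : Continuous fun q : (ℝ × ℝ) × ℝ ↦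
      delayedSlope a g h (delayedPicard a g h q.1 k) q.1.2 q.2 :=
  continuous_delayedSlope (W := fun p ↦ delayedPicard a g h p k) ha hg hM
    (continuous_delayedPicard ha hg hM k) continuous_snd

theorem delayedSlope_congr {u v : ℝ → ℝ} {d b x : ℝ} (hb : 0 ≤ b) (huv : EqOn u v (Icc 0 b))
    (hx : 0 ≤ x) (hxb : x ≤ b + h) : delayedSlope a g h u d x = delayedSlope a g h v d x := by
  unfold delayedSlope
  congr 1
  refine intervalIntegral.integral_congr fun t ht ↦ ?_
  rw [uIcc_of_le hx] at ht
  simp only [huv ⟨le_max_right (t - h) 0, max_le (by linarith [ht.2]) hb⟩]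

theorem delayedPicard_succ_eqOn (hh : 0 ≤ h) (p : ℝ × ℝ) (k : ℕ) :
    EqOn (delayedPicard a g h p (k + 1)) (delayedPicard a g h p k) (Icc 0 (k * h)) := by
  induction k with
  | zero =>
    intro x hx
    rw [Nat.cast_zero, zero_mul, Icc_self, mem_singleton_iff] at hx
    simp [hx, delayedPicard]
  | succ k ih =>
    intro x hx
    rw [delayedPicard, delayedPicard]
    congr 1
    refine intervalIntegral.integral_congr fun s hs ↦ ?_
    rw [uIcc_of_le hx.1] at hs
    refine delayedSlope_congr (by positivity) ih hs.1 ?_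
    have := hs.2.trans hx.2
    push_cast at this
    linarith

theorem isSolIcc_delayedPicard {T : ℝ} (ha : Integrable a) (hg : Continuous g)
    (hM : ∀ s, |g s| ≤ M) (hT : 0 ≤ T) (hh : 0 ≤ h) {k : ℕ} (hk : T ≤ k * h) (p : ℝ × ℝ) :
    IsSolIcc (fun t ↦ a t * g (delayedPicard a g h p (k + 1) (max (t - h) 0))) 0 T
      (delayedPicard a g h p (k + 1)) (delayedSlope a g h (delayedPicard a g h p k) p.2) := by
  have hu : Continuous (delayedPicard a g h p (k + 1)) :=
    (continuous_delayedPicard ha hg hM (k + 1)).comp (Continuous.prodMk_right p)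
  have hu' : Continuous (delayedSlope a g h (delayedPicard a g h p k) p.2) :=
    (continuous_delayedSlope_delayedPicard ha hg hM k).comp (Continuous.prodMk_right p)
  refine .of_deriv_eq_left ?_ (fun x _ ↦ ?_) hu'.continuousOn fun x hx ↦ ?_
  · exact ha.intervalIntegrable.mul_continuousOn
      (hg.comp (hu.comp (by fun_prop : Continuous fun t ↦ max (t - h) 0))).continuousOn
  · exact ((hu'.integral_hasStrictDerivAt 0 x).hasDerivAt.const_add p.1).hasDerivWithinAt
  · rw [← delayedSlope_congr (hT.trans hk) (delayedPicard_succ_eqOn hh p k) hx.1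
      (by linarith [hx.2])]
    simp [delayedSlope]

end

section

variable {l r : ℝ}

theorem exists_subseq_tendsto_of_lipschitzOnWith {L : NNReal} {C : ℝ} {u : ℕ → ℝ → ℝ}
    (hlr : l ≤ r) (hL : ∀ n, LipschitzOnWith L (u n) (Icc l r))
    (hC : ∀ n, ∀ x ∈ Icc l r, |u n x| ≤ C) :
    ∃ (v : ℝ → ℝ) (φ : ℕ → ℕ), StrictMono φ ∧ ContinuousOn v (Icc l r) ∧
      ∀ x ∈ Icc l r, Tendsto (fun n ↦ u (φ n) x) atTop (nhds (v x)) := by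
  let S : Set (BoundedContinuousFunction (Icc l r) ℝ) :=
    {f | LipschitzWith L f ∧ ∀ x, f x ∈ Icc (-C) C}
  have hS : IsCompact (closure S) :=
    BoundedContinuousFunction.arzela_ascoli _ isCompact_Icc S (fun f x hf ↦ hf.2 x)
      (LipschitzWith.uniformEquicontinuous _ L fun f ↦ f.2.1).equicontinuous
  let F : ℕ → BoundedContinuousFunction (Icc l r) ℝ := fun n ↦
    BoundedContinuousFunction.mkOfCompact ⟨_, (hL n).continuousOn.domRestrict⟩
  have hF : ∀ n, F n ∈ S := fun n ↦
    ⟨(hL n).to_restrict, fun x ↦ abs_le.1 (hC n x x.2)⟩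
  obtain ⟨f, -, φ, hφ, hlim⟩ := hS.tendsto_subseq fun n ↦ subset_closure (hF n)
  refine ⟨IccExtend hlr f, φ, hφ, f.continuous.Icc_extend'.continuousOn, fun x hx ↦ ?_⟩
  rw [IccExtend_of_mem hlr f hx]
  exact ((continuous_eval_const (⟨x, hx⟩ : Icc l r)).tendsto f).comp hlim

theorem hasDerivWithinAt_integral_Icc {f : ℝ → ℝ} (hf : ContinuousOn f (Icc l r)) {x : ℝ}
    (hx : x ∈ Icc l r) : HasDerivWithinAt (fun y ↦ ∫ t in l..y, f t) (f x) (Icc l r) x := by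
  have : Fact (x ∈ Icc l r) := ⟨hx⟩
  have hl : l ∈ Icc l r := left_mem_Icc.2 (hx.1.trans hx.2)
  exact intervalIntegral.integral_hasDerivWithinAt_right
    (hf.mono (uIcc_subset_Icc hl hx)).intervalIntegrable
    (hf.stronglyMeasurableAtFilter_nhdsWithin measurableSet_Icc x) (hf x hx)

theorem IsSolIcc.of_tendsto {f : ℕ → ℝ → ℝ} {u u' : ℕ → ℝ → ℝ} {F f₀ v : ℝ → ℝ} {d D : ℝ}
    (hlr : l ≤ r) (hs : ∀ n, IsSolIcc (f n) l r (u n) (u' n))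
    (hfi : ∀ n, IntervalIntegrable (f n) volume l r) (hF : IntervalIntegrable F volume l r)
    (hfF : ∀ n, ∀ x ∈ Icc l r, |f n x| ≤ F x) (hD : ∀ n, ∀ x ∈ Icc l r, |u' n x| ≤ D)
    (hf : ∀ x ∈ Icc l r, Tendsto (fun n ↦ f n x) atTop (nhds (f₀ x)))
    (hu : ∀ x ∈ Icc l r, Tendsto (fun n ↦ u n x) atTop (nhds (v x)))
    (hf₀ : IntervalIntegrable f₀ volume l r)
    (hd : Tendsto (fun n ↦ u' n l) atTop (nhds d)) :
    ∃ v', IsSolIcc f₀ l r v v' ∧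
      ∀ x ∈ Icc l r, Tendsto (fun n ↦ u' n x) atTop (nhds (v' x)) := by
  have hl : l ∈ Icc l r := left_mem_Icc.2 hlr
  have hsub {x t : ℝ} (hx : x ∈ Icc l r) (ht : t ∈ uIoc l x) : t ∈ Icc l r :=
    uIcc_subset_Icc hl hx (uIoc_subset_uIcc ht)
  have hu' : ∀ x ∈ Icc l r, Tendsto (fun n ↦ u' n x) atTop (nhds (d - ∫ t in l..x, f₀ t)) := by
    intro x hx
    rw [tendsto_congr fun n ↦ (hs n).deriv_eq l hl x hx]
    refine hd.sub (intervalIntegral.tendsto_integral_filter_of_dominated_convergence F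
      (.of_forall fun n ↦ ?_) (.of_forall fun n ↦ ae_of_all _ fun t ht ↦ hfF n t (hsub hx ht))
      (intervalIntegrable_of_mem_Icc hF hl hx) (ae_of_all _ fun t ht ↦ hf t (hsub hx ht)))
    exact (intervalIntegrable_iff.1 (intervalIntegrable_of_mem_Icc (hfi n) hl hx)).1
  have hv'c : ContinuousOn (fun x ↦ d - ∫ t in l..x, f₀ t) (Icc l r) := by
    have := intervalIntegral.continuousOn_primitive_interval' hf₀ left_mem_uIcc
    rw [uIcc_of_le hlr] at this
    exact continuousOn_const.sub this
  have hv : ∀ x ∈ Icc l r, v x = v l + ∫ s in l..x, (d - ∫ t in l..s, f₀ t) := by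
    intro x hx
    refine tendsto_nhds_unique (hu x hx) ?_
    rw [tendsto_congr fun n ↦ (sub_eq_iff_eq_add'.1 ((hs n).integral_deriv hl hx).symm)]
    refine (hu l hl).add (intervalIntegral.tendsto_integral_filter_of_dominated_convergence
      (fun _ ↦ D) (.of_forall fun n ↦ ?_)
      (.of_forall fun n ↦ ae_of_all _ fun t ht ↦ hD n t (hsub hx ht)) intervalIntegrable_const
      (ae_of_all _ fun t ht ↦ hu' t (hsub hx ht)))
    exact (intervalIntegrable_iff.1 ((hs n).intervalIntegrable_deriv hl hx)).1
  refine ⟨_, .of_deriv_eq_left hf₀ (fun x hx ↦ ?_) hv'c fun x _ ↦ ?_, hu'⟩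
  · exact ((hasDerivWithinAt_integral_Icc hv'c hx).const_add (v l)).congr hv (hv x hx)
  · rw [intervalIntegral.integral_same, sub_zero]

end

theorem tendsto_apply_of_lipschitzOnWith {ι X Y : Type*} [PseudoMetricSpace X]
    [PseudoMetricSpace Y] {p : Filter ι} {L : NNReal} {s : Set X} {u : ι → X → Y} {x : ι → X}
    {x₀ : X} {y : Y} (hL : ∀ i, LipschitzOnWith L (u i) s) (hxs : ∀ i, x i ∈ s) (hx₀ : x₀ ∈ s)
    (hx : Tendsto x p (nhds x₀)) (hu : Tendsto (fun i ↦ u i x₀) p (nhds y)) :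
    Tendsto (fun i ↦ u i (x i)) p (nhds y) := by
  have hdist : Tendsto (fun i ↦ (L : ℝ) * dist x₀ (x i)) p (nhds 0) := by
    simpa using ((tendsto_const_nhds (x := x₀)).dist hx).const_mul (L : ℝ)
  exact hu.congr_dist (squeeze_zero (fun _ ↦ dist_nonneg)
    (fun i ↦ (hL i).dist_le_mul x₀ hx₀ (x i) (hxs i)) hdist)

theorem IsSolIcc.lipschitzOnWith {f u u' : ℝ → ℝ} {l r D : ℝ} (hs : IsSolIcc f l r u u')
    (hD : ∀ x ∈ Icc l r, |u' x| ≤ D) : LipschitzOnWith D.toNNReal u (Icc l r) :=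
  (convex_Icc l r).lipschitzOnWith_of_nnnorm_hasDerivWithin_le hs.hasDerivWithinAt fun x hx ↦
    NNReal.le_toNNReal_of_coe_le (hD x hx)

section

variable {T : ℝ} {a g : ℝ → ℝ}

theorem exists_subseq_tendsto_of_delayed {M B : ℝ} {h : ℕ → ℝ} {u u' : ℕ → ℝ → ℝ} (hT : 0 ≤ T)
    (ha : IntervalIntegrable a volume 0 T) (hg : Continuous g) (hM : ∀ s, |g s| ≤ M)
    (hh : ∀ n, 0 ≤ h n) (hh0 : Tendsto h atTop (nhds 0))
    (hs : ∀ n, IsSolIcc (fun t ↦ a t * g (u n (max (t - h n) 0))) 0 T (u n) (u' n))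
    (hu : ∀ n, |u n 0| ≤ B) (hu' : ∀ n, |u' n 0| ≤ B) :
    ∃ (v v' : ℝ → ℝ) (φ : ℕ → ℕ), StrictMono φ ∧ IsSolIcc (fun t ↦ a t * g (v t)) 0 T v v' ∧
      ∀ x ∈ Icc 0 T, Tendsto (fun n ↦ (u (φ n) x, u' (φ n) x)) atTop (nhds (v x, v' x)) := by
  have h0T : (0 : ℝ) ∈ Icc 0 T := left_mem_Icc.2 hT
  set D := B + M * ∫ t in (0 : ℝ)..T, |a t|
  have hD : ∀ n, ∀ x ∈ Icc 0 T, |u' n x| ≤ D := by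
    intro n x hx
    have := (hs n).abs_deriv_sub_le ha (fun t _ ↦ hM _) hx
    linarith [abs_sub_abs_le_abs_sub (u' n x) (u' n 0), hu' n]
  have hL : ∀ n, LipschitzOnWith D.toNNReal (u n) (Icc 0 T) := fun n ↦
    (hs n).lipschitzOnWith (hD n)
  have hC : ∀ n, ∀ x ∈ Icc 0 T, |u n x| ≤ B + D.toNNReal * T := by
    intro n x hx
    have hdist : |u n x - u n 0| ≤ D.toNNReal * |x - 0| := (hL n).dist_le_mul x hx 0 h0T
    rw [sub_zero, abs_of_nonneg hx.1] at hdist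
    linarith [abs_sub_abs_le_abs_sub (u n x) (u n 0), hu n,
      mul_le_mul_of_nonneg_left hx.2 D.toNNReal.coe_nonneg]
  obtain ⟨v, φ, hφ, hv, hφv⟩ := exists_subseq_tendsto_of_lipschitzOnWith hT hL hC
  obtain ⟨d, -, ψ, hψ, hψd⟩ := tendsto_subseq_of_bounded (Metric.isBounded_Icc (-B) B)
    (fun n ↦ abs_le.1 (hu' (φ n)))
  have huv : ∀ x ∈ Icc 0 T, Tendsto (fun n ↦ u (φ (ψ n)) x) atTop (nhds (v x)) := fun x hx ↦
    (hφv x hx).comp hψ.tendsto_atTop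
  have hdelay : ∀ n, ∀ x ∈ Icc 0 T, max (x - h n) 0 ∈ Icc 0 T := fun n x hx ↦
    ⟨le_max_right _ _, max_le ((sub_le_self _ (hh n)).trans hx.2) hT⟩
  have hdelay_cont : ∀ n, ContinuousOn (fun t ↦ g (u n (max (t - h n) 0))) (Icc 0 T) := fun n ↦
    hg.comp_continuousOn ((hs n).continuousOn.comp (by fun_prop) (hdelay n))
  have hlim : ∀ x ∈ Icc 0 T,
      Tendsto (fun n ↦ u (φ (ψ n)) (max (x - h (φ (ψ n))) 0)) atTop (nhds (v x)) := by
    intro x hx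
    refine tendsto_apply_of_lipschitzOnWith (fun n ↦ hL (φ (ψ n))) (fun n ↦ hdelay _ x hx) hx
      ?_ (huv x hx)
    have := (tendsto_const_nhds (x := x)).sub (hh0.comp (hφ.comp hψ).tendsto_atTop)
    simpa [hx.1] using this.max (tendsto_const_nhds (x := (0 : ℝ)))
  obtain ⟨v', hv', huv'⟩ := IsSolIcc.of_tendsto (F := fun t ↦ |a t| * M)
    (f₀ := fun t ↦ a t * g (v t)) hT (fun n ↦ hs (φ (ψ n)))
    (fun n ↦ ha.mul_continuousOn (uIcc_of_le hT ▸ hdelay_cont _)) (ha.abs.mul_const M)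
    (fun n x _ ↦ (abs_mul _ _).trans_le (mul_le_mul_of_nonneg_left (hM _) (abs_nonneg _)))
    (fun n ↦ hD (φ (ψ n))) (fun x hx ↦ ((hg.tendsto _).comp (hlim x hx)).const_mul _) huv
    (ha.mul_continuousOn (uIcc_of_le hT ▸ hg.comp_continuousOn hv)) hψd
  exact ⟨v, v', φ ∘ ψ, hφ.comp hψ, hv', fun x hx ↦ (huv x hx).prodMk_nhds (huv' x hx)⟩

/-- `F n` are continuous single-valued approximations, on the data `|p.1| + |p.2| ≤ R`, of the
possibly multivalued map `(u 0, u' 0) ↦ (u T, u' T)`: a closed relation which infinitely many of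
them satisfy somewhere is satisfied by a solution. -/
structure IsApproxFlow (T : ℝ) (a g : ℝ → ℝ) (R : ℝ) (F : ℕ → ℝ × ℝ → ℝ × ℝ) : Prop where
  continuous : ∀ n, Continuous (F n)
  exists_isSolIcc : ∀ Z : Set ((ℝ × ℝ) × ℝ × ℝ), IsClosed Z →
    (∃ᶠ n in atTop, ∃ p : ℝ × ℝ, |p.1| + |p.2| ≤ R ∧ (p, F n p) ∈ Z) →
    ∃ u u' : ℝ → ℝ, IsSolIcc (fun t ↦ a t * g (u t)) 0 T u u' ∧ ((u 0, u' 0), u T, u' T) ∈ Z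

theorem IsApproxFlow.eventually_notMem {R : ℝ} {F : ℕ → ℝ × ℝ → ℝ × ℝ}
    (hF : IsApproxFlow T a g R F) {Z : Set ((ℝ × ℝ) × ℝ × ℝ)} (hZ : IsClosed Z)
    (hsol : ∀ u u' : ℝ → ℝ, IsSolIcc (fun t ↦ a t * g (u t)) 0 T u u' →
      ((u 0, u' 0), u T, u' T) ∉ Z) :
    ∀ᶠ n in atTop, ∀ p : ℝ × ℝ, |p.1| + |p.2| ≤ R → (p, F n p) ∉ Z := by
  by_contra hcon
  obtain ⟨u, u', hs, hmem⟩ := hF.exists_isSolIcc Z hZ <| by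
    simpa only [Filter.Frequently, not_exists, not_and] using hcon
  exact hsol u u' hs hmem

theorem exists_isApproxFlow_of_bounded {M : ℝ} (hT : 0 ≤ T)
    (ha : IntervalIntegrable a volume 0 T) (hg : Continuous g) (hM : ∀ s, |g s| ≤ M) (R : ℝ) :
    ∃ F, IsApproxFlow T a g R F := by
  set b := (Icc 0 T).indicator a
  have hb : Integrable b := ((intervalIntegrable_iff_integrableOn_Icc_of_le hT).1
    ha).integrable_indicator measurableSet_Icc
  set h : ℕ → ℝ := fun n ↦ T / (n + 1)
  have hh : ∀ n, 0 ≤ h n := fun n ↦ by positivity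
  have hsol (n : ℕ) (p : ℝ × ℝ) := isSolIcc_delayedPicard hb hg hM hT (hh n) (k := n + 1)
    (by push_cast; exact (mul_div_cancel₀ T (by positivity)).ge) p
  refine ⟨fun n p ↦ (delayedPicard b g (h n) p (n + 2) T,
    delayedSlope b g (h n) (delayedPicard b g (h n) p (n + 1)) p.2 T), fun n ↦ ?_,
    fun Z hZ hfreq ↦ ?_⟩
  · exact ((continuous_delayedPicard hb hg hM (n + 2)).comp (Continuous.prodMk_left T)).prodMk
      ((continuous_delayedSlope_delayedPicard hb hg hM (n + 1)).comp (Continuous.prodMk_left T))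
  obtain ⟨ψ, hψ, hmem⟩ := extraction_of_frequently_atTop hfreq
  choose p hp hpZ using hmem
  have hu0 (n k : ℕ) : delayedPicard b g (h n) (p k) (n + 1 + 1) 0 = (p k).1 := by
    simp [delayedPicard]
  have hu'0 (n k : ℕ) : delayedSlope b g (h n) (delayedPicard b g (h n) (p k) (n + 1)) (p k).2 0 =
      (p k).2 := by simp [delayedSlope]
  have hh0 : Tendsto h atTop (nhds 0) := by
    simpa [h, Function.comp_def] using
      (tendsto_const_div_atTop_nhds_zero_nat T).comp (tendsto_add_atTop_nat 1)
  obtain ⟨v, v', φ, -, hv, hlim⟩ := exists_subseq_tendsto_of_delayed hT hb.intervalIntegrable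
    hg hM (fun n ↦ hh (ψ n)) (hh0.comp hψ.tendsto_atTop)
    (fun n ↦ hsol (ψ n) (p n)) (B := R)
    (fun n ↦ by rw [hu0]; linarith [hp n, abs_nonneg (p n).2])
    (fun n ↦ by rw [hu'0]; linarith [hp n, abs_nonneg (p n).1])
  refine ⟨v, v', hv.congr fun t ht ↦ by simp only [b, indicator_of_mem ht], ?_⟩
  refine hZ.mem_of_tendsto ((hlim 0 (left_mem_Icc.2 hT)).prodMk_nhds
    (hlim T (right_mem_Icc.2 hT))) (.of_forall fun n ↦ ?_)
  rw [hu0, hu'0]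
  exact hpZ (φ n)

theorem IsNonlinearity.exists_isApproxFlow {K : ℝ} (hg : IsNonlinearity g K) (hT : 0 ≤ T)
    (ha : IntervalIntegrable a volume 0 T) (R : ℝ) : ∃ F, IsApproxFlow T a g R F := by
  have hK := hg.coeff_pos.le
  obtain ⟨E, hE1, hE⟩ := exists_forall_abs_add_abs_deriv_le hK ha
  set B := E * R
  have hle : ∀ s, |g (min s B)| ≤ K * |s| := fun s ↦
    hg.abs_le_of_le ((min_le_left _ _).trans (le_abs_self s)) (abs_nonneg s)
  obtain ⟨F, hF⟩ := exists_isApproxFlow_of_bounded (g := fun s ↦ g (min s B)) hT ha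
    (hg.continuous.comp (by fun_prop))
    (fun s ↦ hg.abs_le_of_le ((min_le_right s B).trans (le_abs_self B)) (abs_nonneg B)) R
  refine ⟨F, hF.continuous, fun Z hZ hfreq ↦ ?_⟩
  obtain ⟨u, u', hs, hu, hmem⟩ := hF.exists_isSolIcc ({q | |q.1.1| + |q.1.2| ≤ R} ∩ Z)
    ((isClosed_le (by fun_prop) continuous_const).inter hZ)
    (hfreq.mono fun n ⟨p, hp, hpZ⟩ ↦ ⟨p, hp, hp, hpZ⟩)
  refine ⟨u, u', hs.congr fun t ht ↦ ?_, hmem⟩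
  have hgrow := hE u u' _ hs (fun x _ ↦ hle (u x)) 0 (left_mem_Icc.2 hT) t ht
  have hub : u t ≤ B := by
    linarith [le_abs_self (u t), abs_nonneg (u' t),
      mul_le_mul_of_nonneg_left hu (zero_le_one.trans hE1)]
  simp only [min_eq_left hub]

end

/-! ### Zeros of planar maps with prescribed signs on the boundary of a rectangle -/

theorem mapsTo_Ioo_of_isPreconnected {X : Type*} [TopologicalSpace X] {s : Set X} {f : X → ℝ}
    {α β : ℝ} (hs : IsPreconnected s) (hf : ContinuousOn f s) (hα : ∀ x ∈ s, f x ≠ α)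
    (hβ : ∀ x ∈ s, f x ≠ β) {x₀ : X} (hx₀ : x₀ ∈ s) (h₀ : f x₀ ∈ Ioo α β) :
    MapsTo f s (Ioo α β) := by
  refine fun x hx ↦ ⟨lt_of_not_ge fun hle ↦ ?_, lt_of_not_ge fun hle ↦ ?_⟩
  · obtain ⟨y, hy, hfy⟩ := hs.intermediate_value hx hx₀ hf ⟨hle, h₀.1.le⟩
    exact hα y hy hfy
  · obtain ⟨y, hy, hfy⟩ := hs.intermediate_value hx₀ hx hf ⟨h₀.2.le, hle⟩
    exact hβ y hy hfy

theorem mapsTo_im_Ioo_of_exp_ne {X : Type*} [TopologicalSpace X] {s : Set X} {z : X → ℂ} {α : ℝ}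
    (hs : IsPreconnected s) (hz : ContinuousOn z s)
    (hexp : ∀ x ∈ s, ∀ ρ : ℝ, 0 < ρ → Complex.exp (z x) ≠ ρ * Complex.exp (α * Complex.I))
    {x₀ : X} (hx₀ : x₀ ∈ s) (h₀ : (z x₀).im ∈ Ioo α (α + 2 * Real.pi)) :
    MapsTo (fun x ↦ (z x).im) s (Ioo α (α + 2 * Real.pi)) := by
  have hpolar : ∀ x, Complex.exp (z x) =
      Real.exp (z x).re * Complex.exp ((z x).im * Complex.I) := fun x ↦ by
    rw [Complex.ofReal_exp, ← Complex.exp_add, Complex.re_add_im]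
  refine mapsTo_Ioo_of_isPreconnected hs (Complex.continuous_im.comp_continuousOn hz)
    (fun x hx h ↦ ?_) (fun x hx h ↦ ?_) hx₀ h₀
  · exact hexp x hx _ (Real.exp_pos _) (by rw [hpolar, h])
  · refine hexp x hx (Real.exp (z x).re) (Real.exp_pos _) ?_
    rw [hpolar, h]
    push_cast
    rw [add_mul, Complex.exp_add, Complex.exp_two_pi_mul_I, mul_one]

theorem exists_continuous_exp_eq_of_ne_zero {a b c d : ℝ} (hab : a ≤ b) (hcd : c ≤ d)
    {f : ℝ × ℝ → ℂ} (hf : ContinuousOn f (Icc a b ×ˢ Icc c d))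
    (hne : ∀ q ∈ Icc a b ×ˢ Icc c d, f q ≠ 0) {q₀ : ℝ × ℝ} (hq₀ : q₀ ∈ Icc a b ×ˢ Icc c d) :
    ∃ L : ℝ × ℝ → ℂ, Continuous L ∧ L q₀ = Complex.log (f q₀) ∧
      ∀ q ∈ Icc a b ×ˢ Icc c d, Complex.exp (L q) = f q := by
  let proj : ℝ × ℝ → ℝ × ℝ := fun q ↦ (max a (min q.1 b), max c (min q.2 d))
  have hproj : ∀ q, proj q ∈ Icc a b ×ˢ Icc c d := fun q ↦
    ⟨⟨le_max_left _ _, max_le hab (min_le_right _ _)⟩,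
      ⟨le_max_left _ _, max_le hcd (min_le_right _ _)⟩⟩
  have hproj_eq : ∀ q ∈ Icc a b ×ˢ Icc c d, proj q = q := fun q hq ↦ by
    simp only [proj, min_eq_left hq.1.2, max_eq_right hq.1.1, min_eq_left hq.2.2,
      max_eq_right hq.2.1]
  let e : C(ℝ × ℝ, ℂ) := ⟨f ∘ proj, hf.comp_continuous (by fun_prop) hproj⟩
  have he : ∀ q ∈ Icc a b ×ˢ Icc c d, e q = f q := fun q hq ↦ congrArg f (hproj_eq q hq)
  obtain ⟨L, ⟨hL₀, hL⟩, -⟩ := Complex.isCoveringMapOn_exp.existsUnique_continuousMap_lifts e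
    (a₀ := q₀) (e₀ := Complex.log (f q₀)) (by rw [Complex.exp_log (hne q₀ hq₀), he q₀ hq₀])
    (fun q ↦ hne _ (hproj q))
  exact ⟨L, L.continuous, hL₀, fun q hq ↦ (congrFun hL q).trans (he q hq)⟩

theorem neg_pi_div_two_lt_im_of_exp_ne {a b c d : ℝ} (hab : a ≤ b) (hcd : c ≤ d)
    {L : ℝ × ℝ → ℂ} (hL : Continuous L)
    (hleft : ∀ y ∈ Icc c d, ∀ ρ : ℝ, 0 < ρ → Complex.exp (L (a, y)) ≠ -(ρ * Complex.I))
    (hbot : ∀ x ∈ Icc a b, ∀ ρ : ℝ, 0 < ρ → Complex.exp (L (x, c)) ≠ -(ρ * Complex.I))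
    (had : |(L (a, d)).im| < Real.pi / 2) : -(Real.pi / 2) < (L (b, c)).im := by
  have hexp_neg_I : Complex.exp (-(Real.pi / 2 * Complex.I)) = -Complex.I := by
    rw [← Complex.exp_neg_pi_div_two_mul_I, neg_div, neg_mul]
  have hang_left := mapsTo_im_Ioo_of_exp_ne (z := fun y ↦ L (a, y)) (α := -(Real.pi / 2))
    isPreconnected_Icc (by fun_prop) (by simpa [hexp_neg_I] using hleft) (right_mem_Icc.2 hcd)
    ⟨(abs_lt.1 had).1, by linarith [(abs_lt.1 had).2, Real.pi_pos]⟩ (left_mem_Icc.2 hcd)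
  exact (mapsTo_im_Ioo_of_exp_ne (z := fun x ↦ L (x, c)) (α := -(Real.pi / 2))
    isPreconnected_Icc (by fun_prop) (by simpa [hexp_neg_I] using hbot) (left_mem_Icc.2 hab)
    hang_left (right_mem_Icc.2 hab)).1

theorem im_neg_of_exp_ne {a b c d : ℝ} (hab : a ≤ b) (hcd : c ≤ d) {L : ℝ × ℝ → ℂ}
    (hL : Continuous L)
    (htop : ∀ x ∈ Icc a b, ∀ ρ : ℝ, 0 < ρ → Complex.exp (L (x, d)) ≠ -ρ)
    (hright : ∀ y ∈ Icc c d, ∀ ρ : ℝ, 0 < ρ → Complex.exp (L (b, y)) ≠ ρ)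
    (had : |(L (a, d)).im| < Real.pi / 2) (hbd : (Complex.exp (L (b, d))).im < 0) :
    (L (b, c)).im < 0 := by
  have hpi := Real.pi_pos
  obtain ⟨had_neg, had_pos⟩ := abs_lt.1 had
  have hang_top := mapsTo_im_Ioo_of_exp_ne (z := fun x ↦ L (x, d)) (α := -Real.pi)
    isPreconnected_Icc (by fun_prop) (by simpa [Complex.exp_neg] using htop) (left_mem_Icc.2 hab)
    ⟨by linarith, by linarith⟩ (right_mem_Icc.2 hab)
  have hang_bd : (L (b, d)).im < 0 := by
    refine lt_of_not_ge fun hge ↦ hbd.not_ge ?_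
    rw [Complex.exp_im]
    exact mul_nonneg (Real.exp_pos _).le
      (Real.sin_nonneg_of_nonneg_of_le_pi hge (by linarith [hang_top.2]))
  have hang_right := mapsTo_im_Ioo_of_exp_ne (z := fun y ↦ L (b, y)) (α := -(2 * Real.pi))
    isPreconnected_Icc (by fun_prop) (by simpa [Complex.exp_neg] using hright)
    (right_mem_Icc.2 hcd) ⟨by linarith [hang_top.1], by linarith⟩ (left_mem_Icc.2 hcd)
  linarith [hang_right.2]

-- If `f` had no zero, its argument at the corner `(b, c)` could be followed from the corner
-- `(a, d)` both ways around the boundary, and the two values would differ.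
theorem exists_eq_zero_of_forall_boundary_ne {a b c d : ℝ} (hab : a ≤ b) (hcd : c ≤ d)
    {f : ℝ × ℝ → ℂ} (hf : ContinuousOn f (Icc a b ×ˢ Icc c d))
    (hleft : ∀ y ∈ Icc c d, ∀ ρ : ℝ, 0 < ρ → f (a, y) ≠ -(ρ * Complex.I))
    (hbot : ∀ x ∈ Icc a b, ∀ ρ : ℝ, 0 < ρ → f (x, c) ≠ -(ρ * Complex.I))
    (htop : ∀ x ∈ Icc a b, ∀ ρ : ℝ, 0 < ρ → f (x, d) ≠ -ρ)
    (hright : ∀ y ∈ Icc c d, ∀ ρ : ℝ, 0 < ρ → f (b, y) ≠ ρ)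
    (had : 0 < (f (a, d)).re) (hbd : (f (b, d)).im < 0) (hbc : (f (b, c)).re < 0) :
    ∃ q ∈ Icc a b ×ˢ Icc c d, f q = 0 := by
  by_contra! hne
  have ha := left_mem_Icc.2 hab
  have hb := right_mem_Icc.2 hab
  have hc := left_mem_Icc.2 hcd
  have hd := right_mem_Icc.2 hcd
  obtain ⟨L, hL, hL₀, hexp⟩ := exists_continuous_exp_eq_of_ne_zero hab hcd hf hne
    (q₀ := (a, d)) ⟨ha, hd⟩
  have hang_ad : |(L (a, d)).im| < Real.pi / 2 := by
    rw [hL₀, Complex.log_im]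
    exact Complex.abs_arg_lt_pi_div_two_iff.2 (.inl had)
  have hlower : -(Real.pi / 2) < (L (b, c)).im := neg_pi_div_two_lt_im_of_exp_ne hab hcd hL
    (fun y hy ↦ hexp (a, y) ⟨ha, hy⟩ ▸ hleft y hy) (fun x hx ↦ hexp (x, c) ⟨hx, hc⟩ ▸ hbot x hx)
    hang_ad
  have hupper : (L (b, c)).im < 0 := im_neg_of_exp_ne hab hcd hL
    (fun x hx ↦ hexp (x, d) ⟨hx, hd⟩ ▸ htop x hx) (fun y hy ↦ hexp (b, y) ⟨hb, hy⟩ ▸ hright y hy)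
    hang_ad (hexp (b, d) ⟨hb, hd⟩ ▸ hbd)
  refine hbc.not_ge ?_
  rw [← hexp _ ⟨hb, hc⟩, Complex.exp_re]
  exact mul_nonneg (Real.exp_pos _).le (Real.cos_nonneg_of_neg_pi_div_two_le_of_le hlower.le
    (by linarith [Real.pi_pos]))

theorem exists_eq_zero_of_boundary_signs {a b c d : ℝ} (hab : a ≤ b) (hcd : c ≤ d)
    {f : ℝ × ℝ → ℝ × ℝ} (hf : ContinuousOn f (Icc a b ×ˢ Icc c d))
    (hleft : ∀ y ∈ Icc c d, (f (a, y)).1 = 0 → 0 ≤ (f (a, y)).2)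
    (hbot : ∀ x ∈ Icc a b, (f (x, c)).1 < 0)
    (htop : ∀ x ∈ Icc a b, (f (x, d)).2 = 0 → 0 ≤ (f (x, d)).1)
    (hright : ∀ y ∈ Icc c d, (f (b, y)).2 = 0 → (f (b, y)).1 ≤ 0)
    (had : 0 < (f (a, d)).1) (hbd : (f (b, d)).2 < 0) :
    ∃ q ∈ Icc a b ×ˢ Icc c d, f q = 0 := by
  let e := Complex.equivRealProdCLM
  have he {q : ℝ × ℝ} {w : ℂ} (h : e.symm (f q) = w) : f q = (w.re, w.im) := by
    rw [← h]
    exact (e.apply_symm_apply (f q)).symm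
  refine (exists_eq_zero_of_forall_boundary_ne hab hcd (f := e.symm ∘ f)
    (e.symm.continuous.comp_continuousOn hf)
    (fun y hy ρ hρ h ↦ ?_) (fun x hx ρ _ h ↦ ?_) (fun x hx ρ hρ h ↦ ?_) (fun y hy ρ hρ h ↦ ?_)
    (by simpa [e] using had) (by simpa [e] using hbd) (by simpa [e] using hbot b ⟨hab, le_rfl⟩)).imp
      fun q ⟨hq, hfq⟩ ↦ ⟨hq, he hfq⟩
  · exact (hleft y hy (by simp [he h])).not_gt (by simpa [he h] using hρ)
  · exact (hbot x hx).ne (by simp [he h])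
  · exact (htop x hx (by simp [he h])).not_gt (by simpa [he h] using hρ)
  · exact (hright y hy (by simp [he h])).not_gt (by simpa [he h] using hρ)

/-! ### Positive solutions of the Neumann and periodic problems -/

/-- What a pair `(p, q)` with `q = F p` has to satisfy when `p` is on the boundary of the
half-annulus `0 ≤ p.1`, `r ≤ p.1 + |p.2| ≤ R` for the displacement `q - p` to have nonzero winding
number along that boundary: on the inner arc, at its upper end, on the outer arc, at its upper end,
on the lower segment and on the upper segment of the axis `p.1 = 0`. -/
def HalfAnnulusCondition (r R : ℝ) (p q : ℝ × ℝ) : Prop :=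
  (p.1 + |p.2| = r → q.1 = p.1 → p.2 < q.2) ∧ (p = (0, r) → 0 < q.1) ∧
  (p.1 + |p.2| = R → q.2 = p.2 → q.1 < p.1) ∧ (p = (0, R) → q.2 < p.2) ∧
  (p.1 = 0 → p.2 ≤ -r → q.1 < 0) ∧ (p.1 = 0 → r ≤ p.2 → q.1 ≤ 0 → q.2 < p.2)

namespace HalfAnnulusCondition

variable {r R : ℝ}

theorem isOpen_setOf : IsOpen {x : (ℝ × ℝ) × ℝ × ℝ | HalfAnnulusCondition r R x.1 x.2} := by
  have himp {p q : (ℝ × ℝ) × ℝ × ℝ → Prop} (hp : IsClosed {x | p x}) (hq : IsOpen {x | q x}) :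
      IsOpen {x | p x → q x} := by
    simpa only [imp_iff_not_or] using! hp.isOpen_compl.union hq
  refine (himp ?_ <| himp ?_ ?_).and <| (himp ?_ ?_).and <| (himp ?_ <| himp ?_ ?_).and <|
    (himp ?_ ?_).and <| (himp ?_ <| himp ?_ ?_).and (himp ?_ <| himp ?_ <| himp ?_ ?_)
  all_goals first
    | exact isClosed_eq (by fun_prop) (by fun_prop)
    | exact isClosed_le (by fun_prop) (by fun_prop)
    | exact isOpen_lt (by fun_prop) (by fun_prop)

theorem exists_fixedPoint {F : ℝ × ℝ → ℝ × ℝ} (hr : 0 ≤ r) (hrR : r ≤ R) (hF : Continuous F)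
    (h : ∀ p : ℝ × ℝ, 0 ≤ p.1 → p.1 + |p.2| ≤ R → HalfAnnulusCondition r R p (F p)) :
    ∃ p : ℝ × ℝ, 0 ≤ p.1 ∧ r ≤ p.1 + |p.2| ∧ p.1 + |p.2| ≤ R ∧ F p = p := by
  let chart : ℝ × ℝ → ℝ × ℝ := fun q ↦ (q.1 * (1 - |q.2|), q.1 * q.2)
  have hchart_nonneg : ∀ q ∈ Icc r R ×ˢ Icc (-1) 1, 0 ≤ (chart q).1 := fun q hq ↦
    mul_nonneg (hr.trans hq.1.1) (sub_nonneg.2 (abs_le.2 hq.2))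
  have hchart_norm : ∀ q ∈ Icc r R ×ˢ Icc (-1) 1, (chart q).1 + |(chart q).2| = q.1 := by
    intro q hq
    simp only [chart, abs_mul, abs_of_nonneg (hr.trans hq.1.1)]
    ring
  have hcond : ∀ q ∈ Icc r R ×ˢ Icc (-1) 1, HalfAnnulusCondition r R (chart q) (F (chart q)) :=
    fun q hq ↦ h _ (hchart_nonneg q hq) ((hchart_norm q hq).trans_le hq.1.2)
  have hrm := left_mem_Icc.2 hrR
  have hRm := right_mem_Icc.2 hrR
  have hm1 : (-1 : ℝ) ∈ Icc (-1) 1 := by norm_num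
  have h1 : (1 : ℝ) ∈ Icc (-1) 1 := by norm_num
  suffices hzero : ∃ q ∈ Icc r R ×ˢ Icc (-1) 1, F (chart q) - chart q = 0 by
    obtain ⟨q, hq, hfq⟩ := hzero
    exact ⟨chart q, hchart_nonneg q hq, (hchart_norm q hq).symm ▸ hq.1.1,
      (hchart_norm q hq).symm ▸ hq.1.2, sub_eq_zero.1 hfq⟩
  refine exists_eq_zero_of_boundary_signs (f := fun q ↦ F (chart q) - chart q)
    hrR (neg_le_self zero_le_one) (by fun_prop : Continuous _).continuousOn
    (fun t ht heq ↦ ?_) (fun ρ hρ ↦ ?_) (fun ρ hρ heq ↦ ?_) (fun t ht heq ↦ ?_) ?_ ?_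
  · obtain ⟨hinner, -⟩ := hcond (r, t) ⟨hrm, ht⟩
    exact (sub_pos.2 (hinner (hchart_norm _ ⟨hrm, ht⟩) (sub_eq_zero.1 heq))).le
  · obtain ⟨-, -, -, -, hlower, -⟩ := hcond (ρ, -1) ⟨hρ, hm1⟩
    simpa [chart, hρ.1] using hlower
  · obtain ⟨-, -, -, -, -, hupper⟩ := hcond (ρ, 1) ⟨hρ, h1⟩
    by_contra! hlt
    have hchart_zero : (chart (ρ, 1)).1 = 0 := by simp [chart]
    refine (hupper hchart_zero ?_ ?_).ne (sub_eq_zero.1 heq)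
    · simpa [chart] using hρ.1
    · simpa [hchart_zero] using hlt.le
  · obtain ⟨-, -, houter, -⟩ := hcond (R, t) ⟨hRm, ht⟩
    exact (sub_neg.2 (houter (hchart_norm _ ⟨hRm, ht⟩) (sub_eq_zero.1 heq))).le
  · obtain ⟨-, hinner, -⟩ := hcond (r, 1) ⟨hrm, h1⟩
    simpa [chart] using hinner
  · obtain ⟨-, -, -, houter, -⟩ := hcond (R, 1) ⟨hRm, h1⟩
    simpa [chart] using houter

end HalfAnnulusCondition

section

variable {T K r R : ℝ} {a g u u' : ℝ → ℝ}

theorem IsSolIcc.halfAnnulusCondition (hs : IsSolIcc (fun t ↦ a t * g (u t)) 0 T u u') (hT : 0 < T)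
    (hg : IsNonlinearity g K) (ha : IntervalIntegrable a volume 0 T) (hr : IsInnerRadius T a g r)
    (hR : IsOuterRadius T a g R) (hrR : r ≤ R) (hu : 0 ≤ u 0) :
    HalfAnnulusCondition r R (u 0, u' 0) (u T, u' T) := by
  have hr0 := hr.pos
  have hfall (hu0 : u 0 ≤ 0) (hu'0 : u' 0 < 0) : u T < 0 := by
    rw [(hs.eq_affine_of_nonpos hg ha hu0 hu'0.le (right_mem_Icc.2 hT.le)).1, sub_zero]
    exact add_neg_of_nonpos_of_neg hu0 (mul_neg_of_neg_of_pos hu'0 hT)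
  have hrise (hu'0 : 0 < u' 0) (huT : u T ≤ 0) : u' T < 0 :=
    (hs.nonpos_and_deriv_neg_of_nonpos hg ha hu (.inr hu'0) (right_mem_Ioc.2 hT) huT).2
  refine ⟨fun hnorm huT ↦ hr.deriv_lt u u' hs hu hnorm (.inr huT), fun hp ↦ ?_,
    fun hnorm hu'T ↦ ?_, fun hp ↦ ?_, fun hu0 hu'0 ↦ ?_, fun _ hu'0 huT ↦ ?_⟩
  · rw [Prod.mk.injEq] at hp
    exact hr.pos_right u u' hs hp.1 hp.2
  · rcases hu.eq_or_lt with hu0 | hu0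
    · have hu'0 : u' 0 ≠ 0 := fun h ↦ by
        rw [← hu0, h, abs_zero, add_zero] at hnorm
        exact (hr0.trans_le hrR).ne hnorm
      rcases hu'0.lt_or_gt with hu'0 | hu'0
      · exact (hfall hu0.ge hu'0).trans_le hu
      · exact absurd hu'T (((hR u u' hs hu (.inr hu'0) hnorm).2.trans hu'0).ne)
    · exact (hR u u' hs hu (.inl hu0) hnorm).1.trans_lt hu0
  · rw [Prod.mk.injEq] at hp
    have hu'0 : 0 < u' 0 := hp.2 ▸ hr0.trans_le hrR
    refine (hR u u' hs hu (.inr hu'0) ?_).2.trans hu'0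
    rw [hp.1, zero_add, abs_of_pos hu'0, hp.2]
  · exact hfall hu0.le (hu'0.trans_lt (neg_neg_of_pos hr0))
  · exact (hrise (hr0.trans_le hu'0) huT).trans (hr0.trans_le hu'0)

theorem IsSolIcc.pos_of_pos_left (hs : IsSolIcc (fun t ↦ a t * g (u t)) 0 T u u')
    (hg : IsNonlinearity g K) (ha : IntervalIntegrable a volume 0 T) (hu : 0 < u 0)
    (huT : 0 < u T ∨ 0 ≤ u' T) : ∀ x ∈ Icc 0 T, 0 < u x := by
  intro x hx
  rcases hx.1.eq_or_lt with rfl | hx0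
  · exact hu
  by_contra! hux
  obtain ⟨huT', hu'T'⟩ := hs.nonpos_and_deriv_neg_of_nonpos hg ha hu.le (.inl hu) ⟨hx0, hx.2⟩ hux
  exact huT.elim huT'.not_gt hu'T'.not_ge

theorem IsApproxFlow.eventually_halfAnnulusCondition {F : ℕ → ℝ × ℝ → ℝ × ℝ}
    (hF : IsApproxFlow T a g R F) (hT : 0 < T) (hg : IsNonlinearity g K)
    (ha : IntervalIntegrable a volume 0 T) (hr : IsInnerRadius T a g r)
    (hR : IsOuterRadius T a g R) (hrR : r ≤ R) :
    ∀ᶠ n in atTop, ∀ p : ℝ × ℝ, 0 ≤ p.1 → p.1 + |p.2| ≤ R →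
      HalfAnnulusCondition r R p (F n p) := by
  have hclosed : IsClosed {x : (ℝ × ℝ) × ℝ × ℝ | 0 ≤ x.1.1} :=
    isClosed_le (by fun_prop) (by fun_prop)
  have := hF.eventually_notMem
    (hclosed.inter (HalfAnnulusCondition.isOpen_setOf (r := r) (R := R)).isClosed_compl)
    fun u u' hs hmem ↦ hmem.2 (hs.halfAnnulusCondition hT hg ha hr hR hrR hmem.1)
  filter_upwards [this] with n hn p hp hpR
  by_contra hnot
  exact hn p (by rwa [abs_of_nonneg hp]) ⟨hp, hnot⟩

theorem IsNonlinearity.posSolPeriodic (hT : 0 < T) (hg : IsNonlinearity g K)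
    (ha : IntervalIntegrable a volume 0 T) (hr : IsInnerRadius T a g r)
    (hR : IsOuterRadius T a g R) (hrR : r ≤ R) : PosSolPeriodic T a g := by
  obtain ⟨F, hF⟩ := hg.exists_isApproxFlow hT.le ha R
  have hclosed : IsClosed {x : (ℝ × ℝ) × ℝ × ℝ | 0 ≤ x.1.1 ∧ r ≤ x.1.1 + |x.1.2| ∧ x.2 = x.1} :=
    (isClosed_le (by fun_prop) (by fun_prop)).and <|
      (isClosed_le (by fun_prop) (by fun_prop)).and (isClosed_eq (by fun_prop) (by fun_prop))
  obtain ⟨u, u', hs, hu, hru, heq⟩ := hF.exists_isSolIcc _ hclosed <| Eventually.frequently <| by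
    filter_upwards [hF.eventually_halfAnnulusCondition hT hg ha hr hR hrR] with n hn
    obtain ⟨p, hp, hrp, hpR, hfix⟩ := HalfAnnulusCondition.exists_fixedPoint hr.pos.le hrR
      (hF.continuous n) hn
    exact ⟨p, by rwa [abs_of_nonneg hp], hp, hrp, hfix⟩
  obtain ⟨huT, hu'T⟩ := Prod.mk.inj heq
  obtain ⟨-, -, -, -, hlower, hupper⟩ := hs.halfAnnulusCondition hT hg ha hr hR hrR hu
  have hu0 : 0 < u 0 := by
    refine hu.lt_of_ne' fun hu0 ↦ ?_
    dsimp only at hu0 hru hlower hupper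
    rw [hu0, zero_add, le_abs'] at hru
    rcases hru with hu'0 | hu'0
    · exact (hlower hu0 hu'0).ne (huT.trans hu0)
    · exact (hupper hu0 hu'0 (huT.trans hu0).le).ne hu'T
  exact ⟨u, u', hs.isSolOn, hs.pos_of_pos_left hg ha hu0 (.inl (huT ▸ hu0)), huT.symm, hu'T.symm⟩

theorem IsApproxFlow.eventually_shooting {F : ℕ → ℝ × ℝ → ℝ × ℝ} (hF : IsApproxFlow T a g R F)
    (hr : IsInnerRadius T a g r) (hR : IsOuterRadius T a g R) (hrR : r ≤ R) :
    ∀ᶠ n in atTop, 0 < (F n (r, 0)).2 ∧ (F n (R, 0)).2 < 0 := by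
  have hR0 := hr.pos.trans_le hrR
  have hclosed_r : IsClosed {x : (ℝ × ℝ) × ℝ × ℝ | x.1 = (r, 0) ∧ x.2.2 ≤ 0} :=
    (isClosed_eq (by fun_prop) (by fun_prop)).and (isClosed_le (by fun_prop) (by fun_prop))
  have hclosed_R : IsClosed {x : (ℝ × ℝ) × ℝ × ℝ | x.1 = (R, 0) ∧ 0 ≤ x.2.2} :=
    (isClosed_eq (by fun_prop) (by fun_prop)).and (isClosed_le (by fun_prop) (by fun_prop))
  have hinner := hF.eventually_notMem hclosed_r fun u u' hs ⟨hp, hle⟩ ↦ by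
    obtain ⟨hu, hu'⟩ := Prod.mk.inj hp
    have := hr.deriv_lt u u' hs (hu ▸ hr.pos.le) (by rw [hu, hu', abs_zero, add_zero]) (.inl hu')
    exact hle.not_gt (hu' ▸ this)
  have houter := hF.eventually_notMem hclosed_R fun u u' hs ⟨hp, hle⟩ ↦ by
    obtain ⟨hu, hu'⟩ := Prod.mk.inj hp
    exact hle.not_gt (hR u u' hs (hu ▸ hR0.le) (.inl (hu ▸ hR0))
      (by rw [hu, hu', abs_zero, add_zero])).2
  filter_upwards [hinner, houter] with n hin hout
  exact ⟨not_le.1 fun h ↦ hin (r, 0) (by simpa [abs_of_pos hr.pos] using hrR) ⟨rfl, h⟩,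
    not_le.1 fun h ↦ hout (R, 0) (by simp [abs_of_pos hR0]) ⟨rfl, h⟩⟩

theorem IsNonlinearity.posSolNeumann (hT : 0 ≤ T) (hg : IsNonlinearity g K)
    (ha : IntervalIntegrable a volume 0 T) (hr : IsInnerRadius T a g r)
    (hR : IsOuterRadius T a g R) (hrR : r ≤ R) : PosSolNeumann T a g := by
  obtain ⟨F, hF⟩ := hg.exists_isApproxFlow hT ha R
  have hclosed : IsClosed {x : (ℝ × ℝ) × ℝ × ℝ | r ≤ x.1.1 ∧ x.1.2 = 0 ∧ x.2.2 = 0} :=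
    (isClosed_le (by fun_prop) (by fun_prop)).and <|
      (isClosed_eq (by fun_prop) (by fun_prop)).and (isClosed_eq (by fun_prop) (by fun_prop))
  obtain ⟨u, u', hs, hru, hu'0, hu'T⟩ := hF.exists_isSolIcc _ hclosed <| Eventually.frequently <| by
    filter_upwards [hF.eventually_shooting hr hR hrR] with n ⟨hin, hout⟩
    have hcont : Continuous fun c : ℝ ↦ (F n (c, 0)).2 :=
      continuous_snd.comp ((hF.continuous n).comp (by fun_prop))
    obtain ⟨c, hc, hFc⟩ := intermediate_value_Icc' hrR hcont.continuousOn ⟨hout.le, hin.le⟩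
    exact ⟨(c, 0), by simpa [abs_of_nonneg (hr.pos.le.trans hc.1)] using hc.2, hc.1, rfl, hFc⟩
  exact ⟨u, u', hs.isSolOn, hs.pos_of_pos_left hg ha (hr.pos.trans_le hru) (.inr hu'T.ge), hu'0,
    hu'T⟩

end

/-! ### Linear extension of the nonlinearity -/

/-- The nonlinearity that agrees with `g` on `[0, R]`, continues it linearly on `[R, ∞)` and takes
the value `g 0` on `(-∞, 0]`. It has linear growth, whereas `g` may be superlinear. -/
noncomputable def linearExt (g : ℝ → ℝ) (R s : ℝ) : ℝ :=
  g (min (max s 0) R) * max 1 (s / R)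

section

variable {g : ℝ → ℝ} {R s : ℝ}

theorem linearExt_of_mem_Icc (hs : s ∈ Icc 0 R) : linearExt g R s = g s := by
  have : s / R ≤ 1 := div_le_one_of_le₀ hs.2 (hs.1.trans hs.2)
  rw [linearExt, max_eq_left hs.1, min_eq_left hs.2, max_eq_left this, mul_one]

theorem linearExt_of_le (hR : 0 < R) (hs : R ≤ s) : linearExt g R s = g R * (s / R) := by
  rw [linearExt, max_eq_left (hR.le.trans hs), min_eq_right hs,
    max_eq_right ((one_le_div hR).2 hs)]

theorem mul_le_linearExt {κ s₀ : ℝ} (hR : 0 < R) (hs₀ : 0 ≤ s₀) (hs₀R : s₀ ≤ R)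
    (hκ : ∀ s, s₀ ≤ s → κ * s ≤ g s) (hs : s₀ ≤ s) : κ * s ≤ linearExt g R s := by
  rcases le_total s R with hsR | hRs
  · rw [linearExt_of_mem_Icc ⟨hs₀.trans hs, hsR⟩]
    exact hκ s hs
  · rw [linearExt_of_le hR hRs]
    calc κ * s = κ * R * (s / R) := by field_simp
      _ ≤ g R * (s / R) :=
        mul_le_mul_of_nonneg_right (hκ R hs₀R) (div_nonneg (hR.le.trans hRs) hR.le)

theorem CondG1.exists_forall_le_mul (hg : CondG1 g)
    (hg0 : Tendsto (fun s ↦ g s / s) (nhdsWithin 0 (Ioi 0)) (nhds 0)) (R : ℝ) :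
    ∃ K, ∀ s ∈ Icc 0 R, g s ≤ K * s := by
  have hcont : ContinuousOn (fun s ↦ g s / s) (Icc 0 R) := by
    intro s hs
    rcases hs.1.eq_or_lt with rfl | hs0
    · refine (continuousWithinAt_Ioi_iff_Ici.1 ?_).mono Icc_subset_Ici_self
      simpa only [ContinuousWithinAt, div_zero] using hg0
    · exact ((hg.1 s hs.1).mono Icc_subset_Ici_self).div continuousWithinAt_id hs0.ne'
  obtain ⟨K, hK⟩ := isCompact_Icc.bddAbove_image hcont
  refine ⟨K, fun s hs ↦ ?_⟩
  rcases hs.1.eq_or_lt with rfl | hs0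
  · rw [hg.2.2.1, mul_zero]
  · exact (div_le_iff₀ hs0).1 (hK (mem_image_of_mem _ hs))

theorem CondG1.exists_isNonlinearity_linearExt (hg : CondG1 g)
    (hg0 : Tendsto (fun s ↦ g s / s) (nhdsWithin 0 (Ioi 0)) (nhds 0)) (hR : 0 < R) :
    ∃ K, IsNonlinearity (linearExt g R) K := by
  obtain ⟨K, hK⟩ := hg.exists_forall_le_mul hg0 R
  obtain ⟨hgc, -, hgz, hgp⟩ := hg
  refine ⟨K, ?_, fun s hs ↦ ?_, fun s hs ↦ ?_, fun s hs ↦ ?_⟩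
  · have : Continuous fun s : ℝ ↦ g (min (max s 0) R) :=
      hgc.comp_continuous (by fun_prop) fun s ↦ le_min (le_max_right _ _) hR.le
    exact this.mul (by fun_prop)
  · rw [linearExt, max_eq_right hs, min_eq_left hR.le, hgz, zero_mul]
  · exact mul_pos (hgp _ (lt_min (lt_max_of_lt_left hs) hR)) (lt_max_of_lt_left one_pos)
  · rcases le_total s R with hsR | hRs
    · rw [linearExt_of_mem_Icc ⟨hs, hsR⟩]
      exact hK s ⟨hs, hsR⟩
    · rw [linearExt_of_le hR hRs]
      calc g R * (s / R) ≤ K * R * (s / R) :=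
            mul_le_mul_of_nonneg_right (hK R ⟨hR.le, le_rfl⟩) (div_nonneg hs hR.le)
        _ = K * s := by field_simp

theorem RegOscAtZero.linearExt (hreg : RegOscAtZero g) (hR : 0 < R) :
    RegOscAtZero (linearExt g R) := by
  intro ε hε
  obtain ⟨δ, hδ, η, hη, h⟩ := hreg ε hε
  refine ⟨min δ (R / 2), by positivity, min η 1, by positivity, fun s ω hs hsδ hω ↦ ?_⟩
  rw [lt_min_iff] at hsδ hω
  obtain ⟨hω0, hω2⟩ := abs_lt.1 hω.2
  have hωs : ω * s ≤ 2 * s := mul_le_mul_of_nonneg_right (by linarith) hs.le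
  rw [linearExt_of_mem_Icc ⟨hs.le, by linarith⟩,
    linearExt_of_mem_Icc ⟨mul_nonneg (by linarith) hs.le, by linarith⟩]
  exact h s ω hs hsδ.1 hω.1

theorem tendsto_linearExt_div (hR : 0 < R)
    (hg0 : Tendsto (fun s ↦ g s / s) (nhdsWithin 0 (Ioi 0)) (nhds 0)) :
    Tendsto (fun s ↦ linearExt g R s / s) (nhdsWithin 0 (Ioi 0)) (nhds 0) := by
  refine hg0.congr' ?_
  filter_upwards [Ioc_mem_nhdsGT hR] with s hs
  rw [linearExt_of_mem_Icc (Ioc_subset_Icc_self hs)]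

end

/-! ### Maximum principle -/

namespace IsSolIcc

variable {f u u' : ℝ → ℝ} {l r : ℝ}

theorem neg (hs : IsSolIcc f l r u u') :
    IsSolIcc (fun t ↦ -f t) l r (fun t ↦ -u t) fun t ↦ -u' t := by
  refine ⟨fun x hx ↦ (hs.hasDerivWithinAt x hx).neg, hs.continuousOn_deriv.neg,
    fun x hx y hy ↦ ?_⟩
  rw [hs.deriv_eq x hx y hy, intervalIntegral.integral_neg]
  ring

theorem deriv_eq_zero_of_isMaxOn (hs : IsSolIcc f l r u u') (hlr : l < r)
    (hbc : u' l = 0 ∧ u' r = 0 ∨ u l = u r ∧ u' l = u' r) {x : ℝ} (hx : x ∈ Icc l r)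
    (hmax : IsMaxOn u (Icc l r) x) : u' x = 0 := by
  have hl : l ∈ Icc l r := left_mem_Icc.2 hlr.le
  have hr : r ∈ Icc l r := right_mem_Icc.2 hlr.le
  have hsign {z y : ℝ} (hz : z ∈ Icc l r) (hy : y ∈ Icc l r) (huz : u z = u x) :
      u' z * (y - z) ≤ 0 :=
    mul_sub_nonpos_of_isMaxOn_Icc (hs.hasDerivWithinAt z hz)
      (fun w hw ↦ (hmax hw).trans huz.ge) hz hy
  have hnonpos (hxr : x < r) : u' x ≤ 0 :=
    nonpos_of_mul_nonpos_left (hsign hx hr rfl) (sub_pos.2 hxr)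
  have hnonneg (hlx : l < x) : 0 ≤ u' x :=
    nonneg_of_mul_nonpos_left (hsign hx hl rfl) (sub_neg.2 hlx)
  rcases hx.1.eq_or_lt with rfl | hlx
  · rcases hbc with hbc | hbc
    · exact hbc.1
    · refine (hnonpos hlr).antisymm (hbc.2 ▸ ?_)
      exact nonneg_of_mul_nonpos_left (hsign hr hl hbc.1.symm) (sub_neg.2 hlr)
  rcases hx.2.eq_or_lt with rfl | hxr
  · rcases hbc with hbc | hbc
    · exact hbc.2
    · refine le_antisymm (hbc.2 ▸ ?_) (hnonneg hlr)
      exact nonpos_of_mul_nonpos_left (hsign hl hr hbc.1) (sub_pos.2 hlr)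
  · exact (hnonpos hxr).antisymm (hnonneg hlx)

theorem le_of_deriv_eq_zero (hs : IsSolIcc f l r u u') {x y : ℝ} (hx : x ∈ Icc l r)
    (hy : y ∈ Icc l r) (hf : ∀ᵐ t ∂volume.restrict (uIcc x y), f t ≤ 0) (hu' : u' x = 0) :
    u x ≤ u y := by
  have hanti : AntitoneOn (fun t ↦ -u' t) (uIcc x y) :=
    (hs.mono (le_min hx.1 hy.1) (max_le hx.2 hy.2)).neg.antitoneOn_deriv
      (hf.mono fun t ↦ neg_nonneg.2)
  rw [← sub_nonneg]
  rcases le_total x y with hxy | hyx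
  · rw [← hs.integral_deriv hx hy]
    refine intervalIntegral.integral_nonneg hxy fun t ht ↦ ?_
    simpa [hu'] using hanti left_mem_uIcc (Icc_subset_uIcc ht) ht.1
  · rw [← neg_sub, ← hs.integral_deriv hy hx, ← intervalIntegral.integral_neg]
    refine intervalIntegral.integral_nonneg hyx fun t ht ↦ ?_
    simpa [hu'] using hanti (Icc_subset_uIcc' ht) left_mem_uIcc ht.2

-- Between a maximum point and the nearest point of `A` the solution is convex.
theorem exists_mem_isMaxOn (hs : IsSolIcc f l r u u') (hlr : l < r)
    (hbc : u' l = 0 ∧ u' r = 0 ∨ u l = u r ∧ u' l = u' r) {A : Set ℝ} (hA : IsCompact A)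
    (hAne : A.Nonempty) (hAlr : A ⊆ Icc l r)
    (hf : ∀ᵐ x ∂volume.restrict (Icc l r \ A), f x ≤ 0) : ∃ y ∈ A, IsMaxOn u (Icc l r) y := by
  obtain ⟨x, hx, hmax⟩ := isCompact_Icc.exists_isMaxOn (nonempty_Icc.2 hlr.le) hs.continuousOn
  obtain ⟨y, hyA, hxy⟩ := hA.exists_infDist_eq_dist hAne x
  have hsub : uIcc x y \ {y} ⊆ Icc l r \ A := by
    refine fun z hz ↦ ⟨uIcc_subset_Icc hx (hAlr hyA) hz.1, fun hzA ↦ hz.2 ?_⟩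
    have hle : dist x y ≤ dist x z := hxy ▸ Metric.infDist_le_dist_of_mem hzA
    rw [Real.dist_eq, Real.dist_eq] at hle
    rcases mem_uIcc.1 hz.1 with ⟨h₁, h₂⟩ | ⟨h₁, h₂⟩
    · rw [abs_of_nonpos (by linarith), abs_of_nonpos (by linarith)] at hle
      exact h₂.antisymm (by linarith)
    · rw [abs_of_nonneg (by linarith), abs_of_nonneg (by linarith)] at hle
      exact le_antisymm (by linarith) h₁
  have hfxy : ∀ᵐ t ∂volume.restrict (uIcc x y), f t ≤ 0 := by
    rw [← Measure.restrict_congr_set (sdiff_null_ae_eq_self (measure_singleton y))]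
    exact ae_restrict_of_ae_restrict_of_subset hsub hf
  exact ⟨y, hyA, fun z hz ↦ (hmax hz).trans
    (hs.le_of_deriv_eq_zero hx (hAlr hyA) hfxy (hs.deriv_eq_zero_of_isMaxOn hlr hbc hx hmax))⟩

end IsSolIcc

/-! ### A priori bounds and the choice of the extension -/

theorem lt_of_not_ae_restrict_Icc {p : ℝ → Prop} {l r : ℝ}
    (h : ¬ ∀ᵐ x ∂volume.restrict (Icc l r), p x) : l < r := by
  contrapose! h
  rw [← restrict_Ioo_eq_restrict_Icc, Ioo_eq_empty h.not_gt, Measure.restrict_empty, ae_zero]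
  exact eventually_bot

theorem exists_mul_le_of_forall_lt_growthLiminf {ι : Type*} [Finite ι] [Nonempty ι] {g : ℝ → ℝ}
    {lam : ι → ℝ} (hlam : ∀ i, (lam i : EReal) < GrowthLiminf g) :
    ∃ κ s₀ : ℝ, (∀ i, lam i < κ) ∧ 0 < s₀ ∧ ∀ s, s₀ ≤ s → κ * s ≤ g s := by
  obtain ⟨i, hi⟩ := Finite.exists_max lam
  obtain ⟨κ, hiκ, hκ⟩ := EReal.lt_iff_exists_real_btwn.1 (hlam i)
  obtain ⟨s₀, hs₀⟩ := eventually_atTop.1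
    ((eventually_lt_of_lt_liminf hκ).and (eventually_gt_atTop (0 : ℝ)))
  refine ⟨κ, s₀, fun j ↦ (hi j).trans_lt (EReal.coe_lt_coe_iff.1 hiκ), (hs₀ s₀ le_rfl).2,
    fun s hs ↦ ?_⟩
  obtain ⟨hκs, hs0⟩ := hs₀ s hs
  exact ((lt_div_iff₀ hs0).1 (EReal.coe_lt_coe_iff.1 hκs)).le

theorem IsNonlinearity.mul_sub_le {g : ℝ → ℝ} {K κ s₀ : ℝ} (hg : IsNonlinearity g K) (hκ : 0 ≤ κ)
    (hs₀ : 0 ≤ s₀) (hκg : ∀ s, s₀ ≤ s → κ * s ≤ g s) (s : ℝ) : κ * (s - s₀) ≤ g s := by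
  rcases le_total s₀ s with hs | hs
  · exact (mul_le_mul_of_nonneg_left (sub_le_self s hs₀) hκ).trans (hκg s hs)
  · exact (mul_nonpos_of_nonneg_of_nonpos hκ (sub_nonpos.2 hs)).trans (hg.nonneg s)

theorem eventually_forall_le_of_dirichletEigenpair {ι : Type*} [Finite ι] {T κ s₀ : ℝ}
    {a : ℝ → ℝ} (ha : IntervalIntegrable a volume 0 T) {σ τ lam : ι → ℝ}
    (hIT : ∀ i, 0 ≤ σ i ∧ σ i ≤ τ i ∧ τ i ≤ T)
    (hapos : ∀ i, ∀ᵐ x ∂volume.restrict (Icc (σ i) (τ i)), 0 ≤ a x)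
    (hane : ∀ i, ¬ ∀ᵐ x ∂volume.restrict (Icc (σ i) (τ i)), a x = 0)
    (hp : ∀ i, DirichletEigenpair a (σ i) (τ i) (lam i)) (hκ0 : 0 ≤ κ) (hκ : ∀ i, lam i < κ)
    (hs₀ : 0 ≤ s₀) :
    ∀ᶠ R in atTop, ∀ (g : ℝ → ℝ) (K : ℝ), IsNonlinearity g K → (∀ s, s₀ ≤ s → κ * s ≤ g s) →
      ∀ u u' : ℝ → ℝ, ∀ i, IsSolIcc (fun t ↦ a t * g (u t)) (σ i) (τ i) u u' →
        (∀ x ∈ Icc (σ i) (τ i), 0 ≤ u x) → ∀ x ∈ Icc (σ i) (τ i), u x ≤ R := by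
  have hbound : ∀ i, ∃ R : ℝ, ∀ u u' h : ℝ → ℝ, ContinuousOn h (Icc (σ i) (τ i)) →
      (∀ x ∈ Icc (σ i) (τ i), 0 ≤ h x) → (∀ x ∈ Icc (σ i) (τ i), κ * (u x - s₀) ≤ h x) →
      IsSolIcc (fun t ↦ a t * h t) (σ i) (τ i) u u' → (∀ x ∈ Icc (σ i) (τ i), 0 ≤ u x) →
      ∀ x ∈ Icc (σ i) (τ i), u x ≤ R := fun i ↦
    (hp i).exists_forall_le (lt_of_not_ae_restrict_Icc (hane i))
      (intervalIntegrable_of_mem_Icc ha ⟨(hIT i).1, (hIT i).2.1.trans (hIT i).2.2⟩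
        ⟨(hIT i).1.trans (hIT i).2.1, (hIT i).2.2⟩) (hapos i) (hane i) (hκ i) s₀
  choose R hR using hbound
  filter_upwards [eventually_all.2 fun i ↦ eventually_ge_atTop (R i)] with R' hR' g K hg hκg u u'
    i hs hu x hx
  exact (hR i u u' _ (hg.continuous.comp_continuousOn hs.continuousOn) (fun y _ ↦ hg.nonneg (u y))
    (fun y _ ↦ hg.mul_sub_le hκ0 hs₀ hκg (u y)) hs hu x hx).trans (hR' i)

theorem IsNonlinearity.posSolNeumann_and_posSolPeriodic {T K l r R : ℝ} {a g : ℝ → ℝ}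
    (hg : IsNonlinearity g K) (hreg : RegOscAtZero g)
    (hg0 : Tendsto (fun s ↦ g s / s) (nhdsWithin 0 (Ioi 0)) (nhds 0))
    (ha : IntervalIntegrable a volume 0 T) (hneg : ∫ x in (0 : ℝ)..T, a x < 0)
    (hl : 0 ≤ l) (hlr : l < r) (hr : r ≤ T)
    (hR : ∀ u u' : ℝ → ℝ, IsSolIcc (fun t ↦ a t * g (u t)) l r u u' →
      (∀ x ∈ Icc l r, 0 ≤ u x) → ∀ x ∈ Icc l r, u x ≤ R) :
    PosSolNeumann T a g ∧ PosSolPeriodic T a g := by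
  have hT : 0 < T := (hl.trans_lt hlr).trans_le hr
  obtain ⟨ρ, hρ⟩ := (eventually_isInnerRadius hT hg hreg hg0 ha hneg).exists
  obtain ⟨R', hR', hρR'⟩ := ((eventually_isOuterRadius hg ha hl hlr hr hR).and
    (eventually_ge_atTop ρ)).exists
  exact ⟨hg.posSolNeumann hT.le ha hρ hR' hρR', hg.posSolPeriodic hT ha hρ hR' hρR'⟩

theorem IsSolOn.isSolIcc {T : ℝ} {a g u u' : ℝ → ℝ} (hs : IsSolOn T (fun t ↦ a t * g (u t)) u u')
    (hT : 0 ≤ T) (ha : IntervalIntegrable a volume 0 T) (hg : Continuous g) :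
    IsSolIcc (fun t ↦ a t * g (u t)) 0 T u u' := by
  refine .of_deriv_eq_left (ha.mul_continuousOn (hg.comp_continuousOn ?_)) hs.1 hs.2.1 hs.2.2
  rw [uIcc_of_le hT]
  exact fun x hx ↦ (hs.1 x hx).continuousWithinAt

theorem IsSolOn.congr_of_forall_le {ι : Type*} [Finite ι] [Nonempty ι] {T K R : ℝ}
    {a g h u u' : ℝ → ℝ} {σ τ : ι → ℝ} (hs : IsSolOn T (fun t ↦ a t * g (u t)) u u')
    (hg : IsNonlinearity g K) (hgh : EqOn g h (Icc 0 R)) (hT : 0 < T)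
    (ha : IntervalIntegrable a volume 0 T) (hIT : ∀ i, 0 ≤ σ i ∧ σ i ≤ τ i ∧ τ i ≤ T)
    (haneg : ∀ᵐ x ∂volume.restrict (Icc 0 T \ ⋃ i, Icc (σ i) (τ i)), a x ≤ 0)
    (hR : ∀ i, IsSolIcc (fun t ↦ a t * g (u t)) (σ i) (τ i) u u' →
      (∀ x ∈ Icc (σ i) (τ i), 0 ≤ u x) → ∀ x ∈ Icc (σ i) (τ i), u x ≤ R)
    (hu : ∀ x ∈ Icc 0 T, 0 < u x) (hbc : u' 0 = 0 ∧ u' T = 0 ∨ u 0 = u T ∧ u' 0 = u' T) :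
    IsSolOn T (fun t ↦ a t * h (u t)) u u' := by
  have hs := hs.isSolIcc hT.le ha hg.continuous
  have hsub (i : ι) : Icc (σ i) (τ i) ⊆ Icc 0 T := Icc_subset_Icc (hIT i).1 (hIT i).2.2
  obtain ⟨y, hyA, hmax⟩ := hs.exists_mem_isMaxOn hT hbc (isCompact_iUnion fun _ ↦ isCompact_Icc)
    (nonempty_iUnion.2 ⟨Classical.arbitrary ι, nonempty_Icc.2 (hIT _).2.1⟩) (iUnion_subset hsub)
    (haneg.mono fun x hx ↦ mul_nonpos_of_nonpos_of_nonneg hx (hg.nonneg _))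
  obtain ⟨i, hy⟩ := mem_iUnion.1 hyA
  have hle : u y ≤ R :=
    hR i (hs.mono (hIT i).1 (hIT i).2.2) (fun x hx ↦ (hu x (hsub i hx)).le) y hy
  exact (hs.congr fun t ht ↦
    congrArg (a t * ·) (hgh ⟨(hu t ht).le, (hmax ht).trans hle⟩)).isSolOn

/-- Theorem (main, regularly oscillating case): under (g1), regular oscillation at
zero, `g(s)/s → 0` as `s → 0⁺`, (a1), (a2), and `g_∞ > λ₁ⁱ` for every interval of
positivity `Iᵢ` (witnessed by a positive first Dirichlet eigenfunction), the
equation `u'' + a(x) g(u) = 0` has a positive Neumann solution and a positive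
periodic solution. -/
theorem statement_1
    (T : ℝ) (hT : 0 < T)
    (g : ℝ → ℝ) (hg1 : CondG1 g) (hreg : RegOscAtZero g)
    (hg0 : Tendsto (fun s => g s / s) (nhdsWithin 0 (Ioi 0)) (nhds 0))
    (a : ℝ → ℝ) (ha : IntervalIntegrable a volume 0 T)
    (m : ℕ) (hm : 0 < m) (σ τ : Fin m → ℝ)
    (hIT : ∀ i, 0 ≤ σ i ∧ σ i ≤ τ i ∧ τ i ≤ T)
    (hdisj : Pairwise fun i j => Disjoint (Icc (σ i) (τ i)) (Icc (σ j) (τ j)))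
    (hapos : ∀ i, ∀ᵐ x ∂(volume.restrict (Icc (σ i) (τ i))), 0 ≤ a x)
    (hane0 : ∀ i, ¬ (∀ᵐ x ∂(volume.restrict (Icc (σ i) (τ i))), a x = 0))
    (haneg : ∀ᵐ x ∂(volume.restrict (Icc (0:ℝ) T \ ⋃ i, Icc (σ i) (τ i))), a x ≤ 0)
    (ha2 : (∫ x in (0:ℝ)..T, a x) < 0)
    (heig : ∀ i, ∃ lam : ℝ, 0 < lam ∧ (lam : EReal) < GrowthLiminf g ∧
      DirichletEigenpair a (σ i) (τ i) lam) :
    PosSolNeumann T a g ∧ PosSolPeriodic T a g := by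
  have : Nonempty (Fin m) := ⟨⟨0, hm⟩⟩
  have i₀ : Fin m := Classical.arbitrary _
  choose lam hlam hlamg hp using heig
  obtain ⟨κ, s₀, hκ, hs₀, hκg⟩ := exists_mul_le_of_forall_lt_growthLiminf hlamg
  have hκ0 : 0 ≤ κ := ((hlam i₀).trans (hκ i₀)).le
  obtain ⟨R, hbound, hs₀R⟩ := ((eventually_forall_le_of_dirichletEigenpair ha hIT hapos hane0 hp
    hκ0 hκ hs₀.le).and (eventually_ge_atTop s₀)).exists
  have hR : 0 < R := hs₀.trans_le hs₀R
  obtain ⟨K, hG⟩ := hg1.exists_isNonlinearity_linearExt hg0 hR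
  specialize hbound _ K hG fun s hs ↦ mul_le_linearExt hR hs₀.le hs₀R hκg hs
  obtain ⟨⟨u, u', hu, hupos, hubc⟩, ⟨v, v', hv, hvpos, hvbc⟩⟩ :=
    hG.posSolNeumann_and_posSolPeriodic (hreg.linearExt hR) (tendsto_linearExt_div hR hg0) ha ha2
      (hIT i₀).1 (lt_of_not_ae_restrict_Icc (hane0 i₀)) (hIT i₀).2.2 (hbound · · i₀)
  exact ⟨⟨u, u', hu.congr_of_forall_le hG (fun _ ↦ linearExt_of_mem_Icc) hT ha hIT haneg
      (hbound u u') hupos (.inl hubc), hupos, hubc⟩,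
    ⟨v, v', hv.congr_of_forall_le hG (fun _ ↦ linearExt_of_mem_Icc) hT ha hIT haneg
      (hbound v v') hvpos (.inr hvbc), hvpos, hvbc⟩⟩
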